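/- arXiv:1005.2561 — 3 statements merged into one kernel-verified Lean document; each statement's English description precedes it below -/
import Mathlib

section
/- Let n ≥ 2 and k ≥ 0. Let X be the set of C-multidissections of P_{2n} with exactly k edges and let the cyclic group C = Z_n act on X by rotation. Then the triple (X, C, X(q)) exhibits the cyclic sieving phenomenon, where X(q) = h_k(1, q, …, q^{n−1})·h_k(1, q, …, q^{n−1}). Equivalently, for every d ≥ 0 the number of C-multidissections in X fixed by the d-th power of rotation equals h_k(1, ζ^d, …, ζ^{(n−1)d})² with ζ = e^{2πi/n}. -/
/-!
A C-multidissection is determined by two multisets of residues modulo `n`, and the cyclic sieving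
phenomenon for multisets is then applied to each of them.

Walk clockwise around the boundary of the `2n`-gon, and lift the walk to `ℤ`. An edge whose
endpoints `i` and `j` are such that `j` lies at most `n` steps clockwise from `i` lifts to arcs from
`i` to `j`; a diameter lifts to arcs starting at either of its endpoints. A C-multidissection
becomes an `n`-periodic multiset of pairwise noncrossing arcs of length at most `n` (`IsArcs`), and
a C-edge is one orbit of arcs under translation by `n`. With `k` C-edges, the starting points and
the ending points of the arcs form two multisets of size `k` in `ℤ/n`.

Conversely, any two such multisets arise from exactly one noncrossing family: regard a starting
point as an opening parenthesis and an ending point as a closing one, with the closings at a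
vertex coming before the openings, and match them cyclically.

* Existence (`exists_arcs`). As the multisets have equal sizes, the height of the parenthesis word
  is periodic, and a parenthesis opened at level `l` is closed when the height first drops
  below `l`.
* Uniqueness (`arcs_ext`). The starting and ending points determine, up to an additive constant,
  the number `c(x)` of arcs passing strictly over `x`. Let `t` be the number of arcs from `i` to
  points beyond `j`. If `t` is positive, then `c(i) + t ≤ c(x)` for all `i < x ≤ j` by
  noncrossingness (`tail_upper`). If some arc from `i` ends at or before `j`, then
  `c(x) ≤ c(i) + t` for some such `x` (`tail_lower`). So `t`, and with it the number of arcs from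
  `i` to `j`, can be read off from the starting and ending points.

The bijection commutes with rotation, so the number of fixed points is the square of the number
of multisets of size `k` in `ℤ/n` invariant under translation by `d` (`card_fixed`). With
`m = gcd(n, d)` and `e = n / m`, this last number is the coefficient of `t^k` in `(1 - t^e)^{-m}`.
Since `ζ^d` is a primitive root of unity of order `e`, this power series equals
`∏_{i < n} (1 - ζ^{d i} t)^{-1}`, the generating function of the specializations
`h_k(1, ζ^d, …, ζ^{(n-1)d})` (`card_perFun`).
-/

open Finset

/-- Two chords `{i,j}` and `{a,b}` of a polygon whose vertices are labeled clockwise by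
`ZMod m` (i.e. `0,1,…,m−1`) cross iff their endpoints strictly interleave in cyclic order:
writing the pairs in increasing order of labels as `{p,q}`, `{r,s}` with `p<q`, `r<s`,
they cross iff `p<r<q<s` or `r<p<s<q`. -/
def crossE {m : ℕ} (i j a b : ZMod m) : Prop :=
  (min i.val j.val < min a.val b.val ∧ min a.val b.val < max i.val j.val ∧
     max i.val j.val < max a.val b.val) ∨
  (min a.val b.val < min i.val j.val ∧ min i.val j.val < max a.val b.val ∧
     max a.val b.val < max i.val j.val)

/-- `T` is a semistandard tableau of two-row shape `(a,b)` (with `b ≤ a` in intended use)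
with entries in `Fin n` (i.e. entries at most `n`): both rows weakly increase and the
columns strictly increase. -/
def IsSSYT2 {n a b : ℕ} (T : (Fin a → Fin n) × (Fin b → Fin n)) : Prop :=
  (∀ i j : Fin a, i ≤ j → T.1 i ≤ T.1 j) ∧
  (∀ i j : Fin b, i ≤ j → T.2 i ≤ T.2 j) ∧
  (∀ (i : Fin b) (h : (i : ℕ) < a), T.1 ⟨i, h⟩ < T.2 i)

open Classical in
/-- The Schur polynomial `s_{(a,b)}(x_1,…,x_n)` of a two-row shape, evaluated at
`x = (x_1,…,x_n)`: the sum over all semistandard tableaux of shape `(a,b)` with entries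
at most `n` of the products of the variables indexed by the entries. -/
noncomputable def schur2 {R : Type*} [CommSemiring R] (n a b : ℕ) (x : Fin n → R) : R :=
  ∑ T : (Fin a → Fin n) × (Fin b → Fin n),
    if IsSSYT2 T then (∏ p, x (T.1 p)) * ∏ p, x (T.2 p) else 0

open Classical in
/-- The complete homogeneous symmetric polynomial `h_k(x_1,…,x_n)` evaluated at
`x = (x_1,…,x_n)`: the sum over weakly increasing sequences `1 ≤ i_1 ≤ ⋯ ≤ i_k ≤ n`
of `x_{i_1} ⋯ x_{i_k}`. -/
noncomputable def hh {R : Type*} [CommSemiring R] (n k : ℕ) (x : Fin n → R) : R :=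
  ∑ T : Fin k → Fin n,
    if (∀ i j : Fin k, i ≤ j → T i ≤ T j) then ∏ p, x (T p) else 0

/-- A C-multidissection of the `2n`-gon `P_{2n}`, whose vertices `1,…,n,1̄,…,n̄`
(clockwise) are encoded as `ZMod (2n)` (with `a ↦ a−1` and `ā ↦ a−1+n`).  It is encoded
as a symmetric, antipodally invariant multiplicity function `g` on ordered pairs of
vertices; the C-edge which is the diameter `{a,ā}` has multiplicity `g a ā`, and a
C-edge which is a pair of centrally symmetric non-diameter edges has multiplicity the
common value of `g` on its two constituent edges.  Whenever two C-edges cross (i.e. some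
constituent edge of one crosses some constituent edge of the other), one of them has
multiplicity `0`; this is equivalent to the support of `g` being pairwise noncrossing. -/
def IsCMulti (n : ℕ) (g : ZMod (2*n) → ZMod (2*n) → ℕ) : Prop :=
  (∀ i j, g i j = g j i) ∧ (∀ i, g i i = 0) ∧
  (∀ i j, g (i + (n : ZMod (2*n))) (j + (n : ZMod (2*n))) = g i j) ∧
  (∀ i j a b, crossE i j a b → g i j = 0 ∨ g a b = 0)

/-- Twice the number of C-edges of the C-multidissection `g`, counted with multiplicity
(each diameter and each centrally symmetric pair of non-diameter edges counting once):
this equals the sum of `g` over diameters plus the sum of `g` over all edges. -/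
def cEdges2 (n : ℕ) (g : ZMod (2*n) → ZMod (2*n) → ℕ) : ℕ :=
  (∑ a ∈ Finset.range n, g (a : ZMod (2*n)) ((a : ZMod (2*n)) + (n : ZMod (2*n)))) +
  ∑ i ∈ Finset.range (2*n), ∑ j ∈ Finset.range (2*n),
    if i < j then g (i : ZMod (2*n)) (j : ZMod (2*n)) else 0

/-! ### Complete homogeneous symmetric polynomials at roots of unity -/

theorem sum_zmod_range {M : Type*} [AddCommMonoid M] (N : ℕ) [NeZero N] (f : ZMod N → M) :
    ∑ i : ZMod N, f i = ∑ x ∈ range N, f (x : ZMod N) := by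
  refine Finset.sum_nbij' (fun i => i.val) (fun x => (x : ZMod N)) ?_ ?_ ?_ ?_ ?_
  · intro i _; simpa using ZMod.val_lt i
  · intro x _; simp
  · intro i _; simp
  · intro x hx; simpa using ZMod.val_cast_of_lt (by simpa using hx)
  · intro i _; simp

theorem prod_range_mul_of_periodic {M : Type*} [CommMonoid M] (f : ℕ → M) (m q : ℕ)
    (hf : ∀ x, f (x + m) = f x) : ∏ x ∈ range (m * q), f x = (∏ x ∈ range m, f x) ^ q := by
  have h : ∀ q x, f (m * q + x) = f x := by
    intro q
    induction q with
    | zero => simp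
    | succ q ih => intro x; rw [← ih x, ← hf (m * q + x)]; congr 1; ring
  induction q with
  | zero => simp
  | succ q ih => rw [mul_add, mul_one, prod_range_add, ih, pow_succ]; simp [h]

theorem sum_range_mul_of_periodic (f : ℕ → ℕ) (m q : ℕ)
    (hf : ∀ x, f (x + m) = f x) : ∑ x ∈ range (m * q), f x = q * ∑ x ∈ range m, f x := by
  have := prod_range_mul_of_periodic (fun x => Multiplicative.ofAdd (f x)) m q
    (fun x => by simp [hf x])
  rw [← ofAdd_sum, ← ofAdd_sum, ← ofAdd_nsmul] at this
  simpa using Multiplicative.ofAdd.injective this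

/-- The generating function of the complete homogeneous symmetric polynomials: `h_k(x)` is
the coefficient of `t^k` in `∏ᵢ (1 + xᵢ t + xᵢ² t² + ⋯)`. -/
theorem hh_eq_coeff {R : Type*} [CommSemiring R] (n k : ℕ) (x : Fin n → R) :
    hh n k x = PowerSeries.coeff k (∏ i : Fin n, PowerSeries.mk fun j => x i ^ j) := by
  classical
  rw [PowerSeries.coeff_prod]
  unfold hh
  rw [← Finset.sum_filter]
  refine Finset.sum_bij
    (fun T _ => Multiset.toFinsupp (Multiset.map T (univ : Finset (Fin k)).val)) ?_ ?_ ?_ ?_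
  · intro T hT
    rw [mem_finsuppAntidiag]
    refine ⟨?_, subset_univ _⟩
    have h := Multiset.toFinsupp_sum_eq (Multiset.map T (univ : Finset (Fin k)).val)
    rw [Finsupp.sum_fintype _ _ (by simp)] at h
    simpa using h
  · intro T hT T' hT' h
    have h := Multiset.toFinsupp.injective h
    simp only [mem_filter, mem_univ, true_and] at hT hT'
    have e : ∀ S : Fin k → Fin n,
        Multiset.map S (univ : Finset (Fin k)).val = (List.ofFn S : Multiset (Fin n)) := by
      intro S
      rw [Fin.univ_val_map]
    rw [e, e, Multiset.coe_eq_coe] at h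
    have := h.eq_of_sortedLE (List.sortedLE_ofFn_iff.2 fun i j hij => hT i j hij)
      (List.sortedLE_ofFn_iff.2 fun i j hij => hT' i j hij)
    exact List.ofFn_injective this
  · intro l hl
    rw [mem_finsuppAntidiag] at hl
    set s : Multiset (Fin n) := Finsupp.toMultiset l with hs
    have hc : (s.sort (· ≤ ·)).length = k := by
      rw [Multiset.length_sort, hs, Finsupp.card_toMultiset, Finsupp.sum_fintype _ _ (by simp)]
      exact hl.1
    subst hc
    refine ⟨fun p => (s.sort (· ≤ ·)).get p, ?_, ?_⟩
    · simp only [mem_filter, mem_univ, true_and]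
      have := Multiset.pairwise_sort s (· ≤ ·)
      intro i j hij
      rcases hij.eq_or_lt with rfl | hlt
      · rfl
      · exact List.pairwise_iff_get.1 this i j hlt
    · rw [Fin.univ_val_map, List.ofFn_get, Multiset.sort_eq, hs, Finsupp.toMultiset_toFinsupp]
  · intro T hT
    simp only [PowerSeries.coeff_mk]
    have : ∏ p, x (T p) = (Multiset.map x (Multiset.map T (univ : Finset (Fin k)).val)).prod := by
      rw [Multiset.map_map]; rfl
    rw [this, Finset.prod_multiset_map_count]
    symm
    simp only [Multiset.toFinsupp_apply]
    refine (Finset.prod_subset (subset_univ _) ?_).symm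
    intro i _ hi
    rw [Multiset.mem_toFinset] at hi
    rw [Multiset.count_eq_zero_of_notMem hi, pow_zero]

/-- Over a primitive root of unity `w` of order `e`, the factors `1 - w^r X` multiply to
`1 - X^e`. -/
theorem prod_one_sub_root (e : ℕ) (he : 0 < e) (w : ℂ) (hw : IsPrimitiveRoot w e) :
    ∏ r ∈ range e, (1 - PowerSeries.C (w ^ r) * (PowerSeries.X : PowerSeries ℂ))
      = 1 - PowerSeries.X ^ e := by
  classical
  have hw' : IsPrimitiveRoot (PowerSeries.C w : PowerSeries ℂ) e :=
    hw.map_of_injective PowerSeries.C_injective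
  have h := hw'.pow_sub_pow_eq_prod_sub_mul (1 : PowerSeries ℂ) PowerSeries.X he
  rw [one_pow] at h
  rw [h]
  have : Polynomial.nthRootsFinset e (1 : PowerSeries ℂ)
      = (range e).image fun r => (PowerSeries.C w : PowerSeries ℂ) ^ r := by
    ext z
    have : NeZero e := ⟨he.ne'⟩
    rw [Polynomial.mem_nthRootsFinset he, mem_image]
    constructor
    · intro hz
      obtain ⟨i, hi, hz⟩ := hw'.eq_pow_of_pow_eq_one hz
      exact ⟨i, mem_range.2 hi, hz⟩
    · rintro ⟨i, -, rfl⟩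
      rw [← pow_mul, mul_comm, pow_mul, hw'.pow_eq_one, one_pow]
  rw [this, prod_image]
  · simp
  · intro i hi j hj hij
    exact hw'.pow_inj (by simpa using hi) (by simpa using hj) hij

/-- With `e` the order of `w` and `n = m e`, the specialization `h_k(1, w, …, w^{n-1})` is the
coefficient of `t^k` in `(1 - t^e)^{-m}`. -/
theorem hh_root (n k m e : ℕ) (he : 0 < e) (hme : n = e * m) (w : ℂ)
    (hw : IsPrimitiveRoot w e) :
    hh n k (fun i : Fin n => w ^ (i : ℕ)) = PowerSeries.coeff k
      (∏ _c : Fin m, (PowerSeries.mk fun j => if e ∣ j then (1 : ℂ) else 0)) := by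
  rw [hh_eq_coeff]
  congr 1
  have h1 : ∀ x : ℂ, (PowerSeries.mk fun j => x ^ j) *
      (1 - PowerSeries.C x * (PowerSeries.X : PowerSeries ℂ)) = 1 := by
    intro x
    ext j
    rw [mul_sub, mul_one, ← mul_assoc]
    cases j with
    | zero => simp
    | succ j => simp [PowerSeries.coeff_succ_mul_X, pow_succ, PowerSeries.coeff_one]
  have h2 : (PowerSeries.mk fun j => if e ∣ j then (1 : ℂ) else 0) *
      (1 - (PowerSeries.X : PowerSeries ℂ) ^ e) = 1 := by
    ext j
    rw [mul_sub, mul_one, map_sub, PowerSeries.coeff_mul_X_pow', PowerSeries.coeff_one]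
    by_cases hj : e ≤ j
    · have : e ∣ j - e ↔ e ∣ j := by
        rw [Nat.dvd_sub_iff_left hj dvd_rfl]
      have h0 : j ≠ 0 := by omega
      simp [hj, this, h0]
    · by_cases h0 : j = 0
      · subst h0; simp [he.ne']
      · have : ¬ e ∣ j := fun h => hj (Nat.le_of_dvd (by omega) h)
        simp [hj, this, h0]
  have h3 : ∏ i : Fin n, (1 - PowerSeries.C (w ^ (i : ℕ)) * (PowerSeries.X : PowerSeries ℂ))
      = (1 - PowerSeries.X ^ e) ^ m := by
    rw [Fin.prod_univ_eq_prod_range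
      (fun i => (1 - PowerSeries.C (w ^ i) * (PowerSeries.X : PowerSeries ℂ))) n, hme,
      prod_range_mul_of_periodic, prod_one_sub_root e he w hw]
    intro x
    rw [pow_add, hw.pow_eq_one, mul_one]
  have hA : (∏ i : Fin n, PowerSeries.mk fun j => (w ^ (i : ℕ)) ^ j) *
      (1 - (PowerSeries.X : PowerSeries ℂ) ^ e) ^ m = 1 := by
    rw [← h3, ← prod_mul_distrib]
    exact prod_eq_one fun i _ => h1 _
  have hB : (∏ _c : Fin m, (PowerSeries.mk fun j => if e ∣ j then (1 : ℂ) else 0)) *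
      (1 - (PowerSeries.X : PowerSeries ℂ) ^ e) ^ m = 1 := by
    rw [prod_const, card_univ, Fintype.card_fin, ← mul_pow, h2, one_pow]
  rw [mul_comm] at hB
  exact left_inv_eq_right_inv hA hB

/-- The functions `ZMod (2n) → ℕ` of total mass `2k` invariant under translation by `n` and by
`d`. They encode the multisets of size `k` of residues mod `n` that are fixed by the `d`-th
power of the rotation. -/
def PerFun (n k d : ℕ) [NeZero n] : Type :=
  {w : ZMod (2 * n) → ℕ // (∀ i, w (i + (n : ZMod (2 * n))) = w i) ∧
    (∀ i, w (i + (d : ZMod (2 * n))) = w i) ∧ ∑ i, w i = 2 * k}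

/-- The cyclic sieving phenomenon for multisets. With `m = gcd n d` and `n = m e`, an invariant
multiset of size `k` is given by its multiplicities at `0, …, m - 1`, whose sum times `e` is `k`;
multiplied by `e`, these are the exponents contributing to the coefficient of `t^k` in
`(1 - t^e)^{-m}`. -/
theorem card_perFun (n k d : ℕ) [NeZero n] :
    (Nat.card (PerFun n k d) : ℂ) =
      hh n k (fun i : Fin n => Complex.exp (2 * Real.pi * Complex.I / n) ^ (d * (i : ℕ))) := by
  classical
  have hn : 0 < n := Nat.pos_of_neZero n
  set m := Nat.gcd n d with hm
  have hm0 : 0 < m := Nat.gcd_pos_of_pos_left _ hn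
  obtain ⟨e, he⟩ : m ∣ n := Nat.gcd_dvd_left n d
  have he0 : 0 < e := Nat.pos_of_ne_zero (by rintro rfl; omega)
  have hz : IsPrimitiveRoot (Complex.exp (2 * Real.pi * Complex.I / n)) n :=
    Complex.isPrimitiveRoot_exp n hn.ne'
  have hw : IsPrimitiveRoot (Complex.exp (2 * Real.pi * Complex.I / n) ^ d) e := by
    have h1 : n / n.gcd d = e := by
      rw [← hm]; nth_rewrite 1 [he]; exact Nat.mul_div_cancel_left e hm0
    have := IsPrimitiveRoot.orderOf (Complex.exp (2 * Real.pi * Complex.I / n) ^ d)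
    rcases Nat.eq_zero_or_pos d with h0 | h0
    · subst h0
      have : e = 1 := by rw [← h1]; simp [hn]
      rw [this]; simp
    · rwa [orderOf_pow' _ h0.ne', ← hz.eq_orderOf, h1] at this
  simp only [pow_mul]
  rw [hh_root n k m e he0 (by rw [mul_comm]; exact he) _ hw, PowerSeries.coeff_prod]
  simp only [PowerSeries.coeff_mk, Finset.prod_ite_zero, prod_const_one]
  rw [Finset.sum_boole, ← Fintype.card_coe, ← Nat.card_eq_fintype_card]
  congr 1
  have hcast : ∀ c : Fin m, (((c : ℕ) : ZMod (2 * n))).val = c := fun c =>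
    ZMod.val_cast_of_lt (by have := c.2; have := Nat.le_of_dvd hn ⟨e, he⟩; omega)
  -- invariance under `n` and `d` amounts to invariance under `m = gcd n d`
  have hper : ∀ w : ZMod (2 * n) → ℕ, (∀ i, w (i + (n : ZMod (2 * n))) = w i) →
      (∀ i, w (i + (d : ZMod (2 * n))) = w i) → ∀ i, w (i + (m : ZMod (2 * n))) = w i := by
    intro w h1 h2
    have hmul : ∀ t : ZMod (2 * n), (∀ i, w (i + t) = w i) → ∀ (z : ℤ) i, w (i + z * t) = w i := by
      intro t ht z
      induction z with
      | zero => simp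
      | succ z ih =>
        intro i
        have := ht (i + (z : ℤ) * t)
        rw [ih i] at this
        rw [← this]; congr 1; push_cast; ring
      | pred z ih =>
        intro i
        have := ht (i + ((-(z : ℤ) - 1 : ℤ) : ZMod (2 * n)) * t)
        rw [← this, ← ih i]; congr 1; push_cast; ring
    intro i
    have hb : (m : ZMod (2 * n)) = (Nat.gcdA n d : ZMod (2 * n)) * n + (Nat.gcdB n d) * d := by
      have := congrArg (Int.cast : ℤ → ZMod (2 * n)) (Nat.gcd_eq_gcd_ab n d)
      push_cast at this
      rw [hm, this]; ring
    rw [hb, ← add_assoc, hmul _ h2, hmul _ h1]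
  have hperN : ∀ w : ZMod (2 * n) → ℕ, (∀ i, w (i + (m : ZMod (2 * n))) = w i) →
      ∀ (q : ℕ) i, w (i + ((m * q : ℕ) : ZMod (2 * n))) = w i := by
    intro w h q
    induction q with
    | zero => simp
    | succ q ih =>
      intro i
      have := h (i + ((m * q : ℕ) : ZMod (2 * n)))
      rw [ih i] at this
      rw [← this]; congr 1; push_cast; ring
  have hsum : ∀ w : ZMod (2 * n) → ℕ, (∀ i, w (i + (m : ZMod (2 * n))) = w i) →
      ∑ i, w i = 2 * e * ∑ c : Fin m, w ((c : ℕ) : ZMod (2 * n)) := by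
    intro w h
    rw [sum_zmod_range, Fin.sum_univ_eq_sum_range (fun c => w (c : ZMod (2 * n))) m,
      ← sum_range_mul_of_periodic]
    · congr 2; rw [he]; ring
    · intro x; rw [← h x]; push_cast; rfl
  refine Nat.card_congr ⟨
    fun w => ⟨Finsupp.equivFunOnFinite.symm fun c : Fin m => e * w.1 ((c : ℕ) : ZMod (2 * n)), ?_⟩,
    fun l => ⟨fun i => l.1 ⟨i.val % m, Nat.mod_lt _ hm0⟩ / e, ?_⟩, ?_, ?_⟩
  · obtain ⟨w, h1, h2, h3⟩ := w
    rw [hsum w (hper w h1 h2)] at h3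
    simp only [mem_filter, mem_finsuppAntidiag]
    refine ⟨⟨?_, subset_univ _⟩, fun c _ => ⟨_, rfl⟩⟩
    simp only [Finsupp.equivFunOnFinite_symm_apply_apply]
    rw [← mul_sum]
    rw [mul_assoc] at h3
    omega
  · obtain ⟨l, hl⟩ := l
    simp only [mem_filter, mem_finsuppAntidiag] at hl
    obtain ⟨⟨hl1, -⟩, hl2⟩ := hl
    have hmod : ∀ (t : ℕ), m ∣ t → ∀ i : ZMod (2 * n),
        (i + (t : ZMod (2 * n))).val % m = i.val % m := by
      intro t ht i
      have h2n : m ∣ 2 * n := ⟨2 * e, by rw [he]; ring⟩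
      rw [ZMod.val_add, ZMod.val_natCast, Nat.mod_mod_of_dvd _ h2n, Nat.add_mod,
        Nat.mod_mod_of_dvd _ h2n, Nat.mod_eq_zero_of_dvd ht]
      simp
    refine ⟨fun i => ?_, fun i => ?_, ?_⟩
    · simp only [hmod n (Nat.gcd_dvd_left n d) i]
    · simp only [hmod d (Nat.gcd_dvd_right n d) i]
    · rw [hsum]
      · have : ∀ c : Fin m, (⟨((c : ℕ) : ZMod (2 * n)).val % m, Nat.mod_lt _ hm0⟩ : Fin m) = c := by
          intro c; ext; simp only [hcast]; exact Nat.mod_eq_of_lt c.2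
        simp only [this]
        rw [mul_assoc, mul_sum, ← hl1]
        congr 1
        exact sum_congr rfl fun c hc => Nat.mul_div_cancel' (hl2 c hc)
      · intro i; simp only [hmod m dvd_rfl i]
  · rintro ⟨w, h1, h2, h3⟩
    apply Subtype.ext
    funext i
    simp only [Finsupp.equivFunOnFinite_symm_apply_apply]
    rw [Nat.mul_div_cancel_left _ he0, ← hperN w (hper w h1 h2) (i.val / m), ← Nat.cast_add,
      Nat.mod_add_div]
    simp
  · rintro ⟨l, hl⟩
    apply Subtype.ext
    ext c
    simp only [mem_filter] at hl
    simp only [Finsupp.equivFunOnFinite_symm_apply_apply, hcast, Nat.mod_eq_of_lt c.2]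
    exact Nat.mul_div_cancel' (hl.2 c (mem_univ c))

/-! ### Noncrossing periodic families of arcs -/

/-- A multiplicity function on the arcs `i < j` of the integer line, with arcs of length at
most `n`, periodic under translation by `n`, whose support is noncrossing. -/
structure IsArcs (n : ℤ) (G : ℤ → ℤ → ℕ) : Prop where
  supp : ∀ i j, G i j ≠ 0 → i < j ∧ j ≤ i + n
  per : ∀ i j, G (i + n) (j + n) = G i j
  nc : ∀ i a j b, i < a → a < j → j < b → G i j = 0 ∨ G a b = 0

/-- The number of arcs starting at `i`. -/
noncomputable def outDeg (n : ℤ) (G : ℤ → ℤ → ℕ) (i : ℤ) : ℕ := ∑ j ∈ Ioc i (i + n), G i j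

/-- The number of arcs ending at `j`. -/
noncomputable def inDeg (n : ℤ) (G : ℤ → ℤ → ℕ) (j : ℤ) : ℕ := ∑ i ∈ Ico (j - n) j, G i j

open Classical in
/-- The number of arcs `(a, b)` with both endpoints in `[-N, N]` that satisfy `P a b`. -/
noncomputable def arcCount (N : ℤ) (G : ℤ → ℤ → ℕ) (P : ℤ → ℤ → Prop) : ℕ :=
  ∑ p ∈ Icc (-N) N ×ˢ Icc (-N) N with P p.1 p.2, G p.1 p.2

theorem arcCount_mono (N : ℤ) (G : ℤ → ℤ → ℕ) (P Q : ℤ → ℤ → Prop)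
    (h : ∀ a b, G a b ≠ 0 → P a b → Q a b) : arcCount N G P ≤ arcCount N G Q := by
  classical
  unfold arcCount
  refine sum_le_sum_of_ne_zero fun p hp h0 => ?_
  rw [mem_filter] at hp ⊢
  exact ⟨hp.1, h _ _ h0 hp.2⟩

theorem arcCount_congr (N : ℤ) (G : ℤ → ℤ → ℕ) (P Q : ℤ → ℤ → Prop)
    (h : ∀ a b, G a b ≠ 0 → (P a b ↔ Q a b)) : arcCount N G P = arcCount N G Q :=
  le_antisymm (arcCount_mono N G P Q fun a b h0 => (h a b h0).1)
    (arcCount_mono N G Q P fun a b h0 => (h a b h0).2)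

theorem arcCount_add (N : ℤ) (G : ℤ → ℤ → ℕ) (P Q : ℤ → ℤ → Prop)
    (h : ∀ a b, P a b → ¬ Q a b) :
    arcCount N G P + arcCount N G Q = arcCount N G (fun a b => P a b ∨ Q a b) := by
  classical
  unfold arcCount
  simp only [sum_filter, ← sum_add_distrib]
  refine sum_congr rfl fun p _ => ?_
  have := h p.1 p.2
  split_ifs <;> first | tauto | simp

theorem exists_of_arcCount_ne_zero (N : ℤ) (G : ℤ → ℤ → ℕ) (P : ℤ → ℤ → Prop)
    (h : arcCount N G P ≠ 0) : ∃ a b, G a b ≠ 0 ∧ P a b := by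
  classical
  obtain ⟨p, hp, h0⟩ := exists_ne_zero_of_sum_ne_zero h
  exact ⟨p.1, p.2, h0, (mem_filter.1 hp).2⟩

theorem arcCount_out {n N : ℤ} {G : ℤ → ℤ → ℕ} (hG : IsArcs n G) (i : ℤ) (h1 : -N ≤ i)
    (h2 : i + n ≤ N) (h3 : 0 ≤ n) : arcCount N G (fun a _ => a = i) = outDeg n G i := by
  classical
  unfold arcCount outDeg
  rw [sum_filter, sum_product, sum_eq_single i]
  · simp only [if_true]
    symm
    refine sum_subset ?_ ?_
    · intro j; simp only [mem_Ioc, mem_Icc]; omega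
    · intro j _ hj
      by_contra h0
      have := hG.supp i j h0
      simp only [mem_Ioc] at hj; omega
  · intro b _ hb; simp [hb]
  · intro h; simp only [mem_Icc] at h; omega

theorem arcCount_in {n N : ℤ} {G : ℤ → ℤ → ℕ} (hG : IsArcs n G) (j : ℤ) (h1 : -N ≤ j - n)
    (h2 : j ≤ N) (h3 : 0 ≤ n) : arcCount N G (fun _ b => b = j) = inDeg n G j := by
  classical
  unfold arcCount inDeg
  rw [sum_filter, sum_product_right, sum_eq_single j]
  · simp only [if_true]
    symm
    refine sum_subset ?_ ?_
    · intro j; simp only [mem_Ico, mem_Icc]; omega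
    · intro i _ hi
      by_contra h0
      have := hG.supp i j h0
      simp only [mem_Ico] at hi; omega
  · intro b _ hb; simp [hb]
  · intro h; simp only [mem_Icc] at h; omega

theorem arcCount_single (N : ℤ) (G : ℤ → ℤ → ℕ) (i j : ℤ) (h1 : -N ≤ i) (h2 : i ≤ N)
    (h3 : -N ≤ j) (h4 : j ≤ N) : arcCount N G (fun a b => a = i ∧ b = j) = G i j := by
  classical
  unfold arcCount
  rw [sum_filter, sum_eq_single (i, j)]
  · simp
  · intro p _ hp
    rw [if_neg]
    rintro ⟨h, h'⟩
    exact hp (Prod.ext h h')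
  · intro h; simp only [mem_product, mem_Icc] at h; omega

/-- The number of arcs passing strictly over `y` changes, from `y` to `y + 1`, by the number
of arcs starting at `y` minus the number of arcs ending at `y + 1`. -/
theorem cover_step {n N : ℤ} {G : ℤ → ℤ → ℕ} (hG : IsArcs n G) (h3 : 0 ≤ n) (y : ℤ)
    (h1 : -N ≤ y + 1 - n) (h2 : y + n + 1 ≤ N) (h4 : -N ≤ y) :
    arcCount N G (fun a b => a < y + 1 ∧ y + 1 < b) + inDeg n G (y + 1) =
      arcCount N G (fun a b => a < y ∧ y < b) + outDeg n G y := by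
  rw [← arcCount_in hG (y + 1) h1 (by omega) h3, ← arcCount_out hG y h4 (by omega) h3,
    arcCount_add, arcCount_add]
  · refine arcCount_congr _ _ _ _ fun a b h0 => ?_
    have := hG.supp a b h0
    omega
  · intro a b; omega
  · intro a b; omega

/-- If `G` and `G'` have the same numbers of arcs starting and ending at each vertex, their
numbers of arcs over `x` differ by a constant. -/
theorem cover_diff {n N : ℤ} {G G' : ℤ → ℤ → ℕ} (hG : IsArcs n G) (hG' : IsArcs n G')
    (h3 : 0 ≤ n) (ho : ∀ i, outDeg n G i = outDeg n G' i) (hi : ∀ i, inDeg n G i = inDeg n G' i)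
    (i : ℤ) (h1 : -N ≤ i - n) (x : ℤ) (hx : i ≤ x) : x + n ≤ N →
    arcCount N G (fun a b => a < x ∧ x < b) + arcCount N G' (fun a b => a < i ∧ i < b) =
    arcCount N G' (fun a b => a < x ∧ x < b) + arcCount N G (fun a b => a < i ∧ i < b) := by
  induction x, hx using Int.leInduction with
  | base => intro _; omega
  | succ x hx ih =>
    intro h2
    have a1 := cover_step (N := N) hG h3 x (by omega) (by omega) (by omega)
    have a2 := cover_step (N := N) hG' h3 x (by omega) (by omega) (by omega)
    have a3 := ho x
    have a4 := hi (x + 1)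
    have := ih (by omega)
    omega

/-- If some arc goes from `i` beyond `j`, then noncrossingness forces every arc over `i` to
pass over each `x ∈ (i, j]` as well. -/
theorem tail_upper {n N : ℤ} {G : ℤ → ℤ → ℕ} (hG : IsArcs n G) (i j : ℤ)
    (h0 : arcCount N G (fun a b => a = i ∧ j < b) ≠ 0) (x : ℤ) (h1 : i < x) (h2 : x ≤ j) :
    arcCount N G (fun a b => a < i ∧ i < b) + arcCount N G (fun a b => a = i ∧ j < b) ≤
      arcCount N G (fun a b => a < x ∧ x < b) := by
  obtain ⟨a', b', hb, rfl, hb'⟩ := exists_of_arcCount_ne_zero _ _ _ h0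
  rw [arcCount_add]
  · refine arcCount_mono _ _ _ _ fun a b hab => ?_
    rintro (⟨h3, h4⟩ | ⟨rfl, h4⟩)
    · refine ⟨by omega, ?_⟩
      by_contra h5
      have := hG.nc a a' b b' h3 h4 (by omega)
      tauto
    · omega
  · intro a b; omega

/-- The bound of `tail_upper` is attained, at the furthest `x ≤ j` where an arc from `i`
ends, as soon as such an `x` exists. -/
theorem tail_lower {n N : ℤ} {G : ℤ → ℤ → ℕ} (hG : IsArcs n G) (h3 : 0 ≤ n) (i j : ℤ)
    (hi : -N ≤ i) (hi' : i + n ≤ N)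
    (h0 : arcCount N G (fun a b => a = i ∧ j < b) < outDeg n G i) :
    ∃ x, i < x ∧ x ≤ j ∧ arcCount N G (fun a b => a < x ∧ x < b) ≤
      arcCount N G (fun a b => a < i ∧ i < b) + arcCount N G (fun a b => a = i ∧ j < b) := by
  have h1 : arcCount N G (fun a b => a = i ∧ b ≤ j) ≠ 0 := by
    intro h
    rw [← arcCount_out hG i hi hi' h3] at h0
    have := arcCount_add N G (fun a b => a = i ∧ j < b) (fun a b => a = i ∧ b ≤ j)
      (by intro a b; omega)
    rw [h] at this
    have h2 := arcCount_congr N G (fun a b => (a = i ∧ j < b) ∨ (a = i ∧ b ≤ j))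
      (fun a _ => a = i) (by intro a b _; omega)
    omega
  obtain ⟨a', b', hb, rfl, hb'⟩ := exists_of_arcCount_ne_zero _ _ _ h1
  have hne : ((Ioc a' j).filter fun b => G a' b ≠ 0).Nonempty :=
    ⟨b', mem_filter.2 ⟨mem_Ioc.2 ⟨(hG.supp _ _ hb).1, hb'⟩, hb⟩⟩
  have hmem := max'_mem _ hne
  have hmax := fun y hy => le_max' ((Ioc a' j).filter fun b => G a' b ≠ 0) y hy
  set x := ((Ioc a' j).filter fun b => G a' b ≠ 0).max' hne
  simp only [mem_filter, mem_Ioc] at hmem hmax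
  refine ⟨x, hmem.1.1, hmem.1.2, ?_⟩
  rw [arcCount_add]
  · refine arcCount_mono _ _ _ _ fun a b hab => ?_
    rintro ⟨h4, h5⟩
    rcases lt_trichotomy a a' with h | rfl | h
    · left; omega
    · right
      refine ⟨rfl, ?_⟩
      by_contra h6
      have := hmax b ⟨⟨by omega, by omega⟩, hab⟩
      omega
    · have := hG.nc a' a x b h h4 h5
      tauto
  · intro a b; omega

/-- If `G` had more arcs than `G'` from `i` beyond `j`, comparing `tail_upper` for `G` with
`tail_lower` for `G'` at the `x` of the latter would contradict `cover_diff`. -/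
theorem tail_le {n N : ℤ} {G G' : ℤ → ℤ → ℕ} (hG : IsArcs n G) (hG' : IsArcs n G')
    (h3 : 0 ≤ n) (ho : ∀ i, outDeg n G i = outDeg n G' i) (hi : ∀ i, inDeg n G i = inDeg n G' i)
    (i j : ℤ) (h1 : -N ≤ i - n) (h2 : i + n ≤ N) (h4 : j + n ≤ N) :
    arcCount N G (fun a b => a = i ∧ j < b) ≤ arcCount N G' (fun a b => a = i ∧ j < b) := by
  by_contra hlt
  have hle : arcCount N G (fun a b => a = i ∧ j < b) ≤ outDeg n G i := by
    rw [← arcCount_out hG i (by omega) h2 h3]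
    exact arcCount_mono _ _ _ _ fun a b _ h => h.1
  obtain ⟨x, hx1, hx2, hx3⟩ := tail_lower (N := N) hG' h3 i j (by omega) h2
    (by rw [← ho]; omega)
  have h5 := tail_upper (N := N) hG i j (by omega) x hx1 hx2
  have h6 := cover_diff (N := N) hG hG' h3 ho hi i h1 x hx1.le (by omega)
  omega

/-- A noncrossing periodic family of arcs is determined by the numbers of arcs starting and
ending at each vertex. -/
theorem arcs_ext {n : ℤ} {G G' : ℤ → ℤ → ℕ} (hG : IsArcs n G) (hG' : IsArcs n G')
    (h3 : 0 ≤ n) (ho : ∀ i, outDeg n G i = outDeg n G' i)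
    (hi : ∀ i, inDeg n G i = inDeg n G' i) : G = G' := by
  funext i j
  -- the window `[-N, N]` contains every arc that meets `i` or `j`
  obtain ⟨N, hN1, hN2, hN3, hN4⟩ : ∃ N : ℤ, -N ≤ i - n ∧ i + n ≤ N ∧ j + n ≤ N ∧ -N ≤ j :=
    ⟨|i| + |j| + n, by have := neg_abs_le i; have := abs_nonneg j; omega,
      by have := le_abs_self i; have := abs_nonneg j; omega,
      by have := le_abs_self j; have := abs_nonneg i; omega,
      by have := neg_abs_le j; have := abs_nonneg i; omega⟩
  have ht : ∀ j', j' + n ≤ N → arcCount N G (fun a b => a = i ∧ j' < b) =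
      arcCount N G' (fun a b => a = i ∧ j' < b) := fun j' hj' =>
    le_antisymm (tail_le hG hG' h3 ho hi i j' hN1 hN2 hj')
      (tail_le hG' hG h3 (fun i => (ho i).symm) (fun i => (hi i).symm) i j' hN1 hN2 hj')
  have hs : ∀ F : ℤ → ℤ → ℕ, F i j + arcCount N F (fun a b => a = i ∧ j < b) =
      arcCount N F (fun a b => a = i ∧ j - 1 < b) := by
    intro F
    rw [← arcCount_single N F i j (by omega) (by omega) (by omega) (by omega), arcCount_add]
    · exact arcCount_congr _ _ _ _ fun a b _ => by omega
    · intro a b; omega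
  have := hs G
  have := hs G'
  have := ht j hN3
  have := ht (j - 1) (by omega)
  omega

/-! ### Existence of noncrossing families: parenthesis matching -/

/-- The number of arcs from `i` to `j` in the parenthesis matching with height function `h`,
where `u i` parentheses open at `i`. A parenthesis opened at `i` at level `ℓ` is closed at
the first `j > i` where the height, after the closings at `j`, is below `ℓ`. -/
noncomputable def matching (h : ℤ → ℤ) (u : ℤ → ℕ) (i j : ℤ) : ℕ :=
  #{l ∈ Ioc (h i) (h i + u i) | i < j ∧ h j < l ∧ ∀ x, i < x → x < j → l ≤ h x}

section matching

variable {n : ℤ} {h : ℤ → ℤ} {u v : ℤ → ℕ}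

theorem exists_of_matching_ne_zero {i j : ℤ} (h0 : matching h u i j ≠ 0) :
    ∃ l, h i < l ∧ i < j ∧ h j < l ∧ ∀ x, i < x → x < j → l ≤ h x := by
  unfold matching at h0
  obtain ⟨l, hl⟩ := card_pos.1 (Nat.pos_of_ne_zero h0)
  simp only [mem_filter, mem_Ioc] at hl
  exact ⟨l, hl.1.1, hl.2⟩

theorem matching_translate (t : ℤ) (hh : ∀ x, h (x + t) = h x) (hu : ∀ x, u (x + t) = u x)
    (i j : ℤ) : matching h u (i + t) (j + t) = matching h u i j := by
  unfold matching
  congr 1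
  rw [hh, hu]
  ext l
  simp only [mem_filter, hh]
  refine and_congr Iff.rfl <| and_congr (by omega) (and_congr Iff.rfl
    ⟨fun H x h1 h2 => ?_, fun H x h1 h2 => ?_⟩)
  · rw [← hh]; exact H _ (by omega) (by omega)
  · have := H (x - t) (by omega) (by omega)
    rwa [← hh, sub_add_cancel] at this

theorem isArcs_matching (hh : ∀ x, h (x + n) = h x) (hu : ∀ x, u (x + n) = u x) (hn : 0 < n) :
    IsArcs n (matching h u) := by
  refine ⟨fun i j h0 => ?_, matching_translate n hh hu, fun i a j b h1 h2 h3 => ?_⟩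
  · obtain ⟨l, h1, h2, h3, h4⟩ := exists_of_matching_ne_zero h0
    refine ⟨h2, ?_⟩
    by_contra h5
    have := h4 (i + n) (by omega) (by omega)
    rw [hh] at this
    omega
  · by_contra! hc
    obtain ⟨l, -, -, h4, h5⟩ := exists_of_matching_ne_zero hc.1
    obtain ⟨l', h6, -, -, h7⟩ := exists_of_matching_ne_zero hc.2
    have := h5 a h1 h2
    have := h7 j h2 h3
    omega

theorem outDeg_matching (hh : ∀ x, h (x + n) = h x) (hn : 0 < n) (i : ℤ) :
    outDeg n (matching h u) i = u i := by
  unfold outDeg matching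
  simp only [card_filter]
  rw [sum_comm]
  have : ∀ l ∈ Ioc (h i) (h i + u i), ∑ j ∈ Ioc i (i + n),
      (if i < j ∧ h j < l ∧ ∀ x, i < x → x < j → l ≤ h x then 1 else 0) = 1 := by
    intro l hl
    rw [mem_Ioc] at hl
    have hne : ((Ioc i (i + n)).filter fun j => h j < l).Nonempty :=
      ⟨i + n, mem_filter.2 ⟨mem_Ioc.2 ⟨by omega, le_rfl⟩, by rw [hh]; omega⟩⟩
    have hmem := min'_mem _ hne
    have hmin := fun y hy => min'_le ((Ioc i (i + n)).filter fun j => h j < l) y hy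
    set j := ((Ioc i (i + n)).filter fun j => h j < l).min' hne
    simp only [mem_filter, mem_Ioc] at hmem hmin
    rw [sum_eq_single j, if_pos]
    · refine ⟨hmem.1.1, hmem.2, fun x h1 h2 => ?_⟩
      by_contra h3
      have := hmin x ⟨⟨h1, by omega⟩, by omega⟩
      omega
    · intro j' hj' hne'
      rw [mem_Ioc] at hj'
      rw [if_neg]
      rintro ⟨h1, h2, h3⟩
      have := hmin j' ⟨hj', h2⟩
      have := h3 j hmem.1.1 (by omega)
      omega
    · intro h4; rw [mem_Ioc] at h4; omega
  rw [sum_congr rfl this]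
  simp

/-- If `v j` parentheses close at `j`, the matching is also described from the closing end:
levels in `(h j, h j + v j]` are those closed at `j`. -/
theorem matching_eq_card_in (hs : ∀ x, h (x + 1) = h x + u x - v (x + 1)) (i j : ℤ) :
    matching h u i j =
      #{l ∈ Ioc (h j) (h j + v j) | i < j ∧ h i < l ∧ ∀ x, i < x → x < j → l ≤ h x} := by
  unfold matching
  congr 1
  ext l
  simp only [mem_filter, mem_Ioc]
  by_cases hij : i < j
  · rcases (show i + 1 = j ∨ i + 1 < j by omega) with rfl | h1
    · have := hs i
      constructor
      · rintro ⟨h2, -, h3, h4⟩; exact ⟨by omega, by omega, by omega, h4⟩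
      · rintro ⟨h2, -, h3, h4⟩; exact ⟨by omega, by omega, by omega, h4⟩
    · have e1 := hs i
      have e2 := hs (j - 1)
      rw [sub_add_cancel] at e2
      constructor
      · rintro ⟨h2, -, h3, h4⟩
        have := h4 (j - 1) (by omega) (by omega)
        exact ⟨by omega, by omega, by omega, h4⟩
      · rintro ⟨h2, -, h3, h4⟩
        have := h4 (i + 1) (by omega) (by omega)
        exact ⟨by omega, by omega, by omega, h4⟩
  · tauto

theorem inDeg_matching (hs : ∀ x, h (x + 1) = h x + u x - v (x + 1))
    (hh : ∀ x, h (x + n) = h x) (hn : 0 < n) (j : ℤ) :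
    inDeg n (matching h u) j = v j := by
  unfold inDeg
  simp only [matching_eq_card_in hs, card_filter]
  rw [sum_comm]
  have : ∀ l ∈ Ioc (h j) (h j + v j), ∑ i ∈ Ico (j - n) j,
      (if i < j ∧ h i < l ∧ ∀ x, i < x → x < j → l ≤ h x then 1 else 0) = 1 := by
    intro l hl
    rw [mem_Ioc] at hl
    have hne : ((Ico (j - n) j).filter fun i => h i < l).Nonempty :=
      ⟨j - n, mem_filter.2 ⟨mem_Ico.2 ⟨le_rfl, by omega⟩, by
        have := hh (j - n)
        rw [sub_add_cancel] at this
        omega⟩⟩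
    have hmem := max'_mem _ hne
    have hmax := fun y hy => le_max' ((Ico (j - n) j).filter fun i => h i < l) y hy
    set i := ((Ico (j - n) j).filter fun i => h i < l).max' hne
    simp only [mem_filter, mem_Ico] at hmem hmax
    rw [sum_eq_single i, if_pos]
    · refine ⟨hmem.1.2, hmem.2, fun x h1 h2 => ?_⟩
      by_contra h3
      have := hmax x ⟨⟨by omega, h2⟩, by omega⟩
      omega
    · intro i' hi' hne'
      rw [mem_Ico] at hi'
      rw [if_neg]
      rintro ⟨h1, h2, h3⟩
      have := hmax i' ⟨hi', h2⟩
      have := h3 i (by omega) hmem.1.2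
      omega
    · intro h4; rw [mem_Ico] at h4; omega
  rw [sum_congr rfl this]
  simp

end matching

/-- Any two `n`-periodic functions with equal sums over a period are the numbers of arcs
starting, respectively ending, at each vertex of some noncrossing periodic family of arcs. -/
theorem exists_arcs (n : ℕ) (hn : 0 < n) (u v : ℤ → ℕ) (hu : ∀ x, u (x + n) = u x)
    (hv : ∀ x, v (x + n) = v x) (hsum : ∑ x ∈ range n, u x = ∑ x ∈ range n, v x) :
    ∃ G, IsArcs n G ∧ (∀ i, outDeg n G i = u i) ∧ ∀ i, inDeg n G i = v i := by
  -- `h x` is the height just after the closings at `x`, normalized by `h 0 = 0`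
  set δ : ℤ → ℤ := fun y => (u y : ℤ) - v (y + 1) with hδ
  set h : ℤ → ℤ := fun x => ∑ y ∈ range (x % n).toNat, δ y with hh
  have hn' : (0 : ℤ) < n := by exact_mod_cast hn
  have hmod : ∀ w : ℤ → ℕ, (∀ x, w (x + n) = w x) → ∀ x, w (x % n) = w x := by
    intro w hw x
    have hz : ∀ q x : ℤ, w (x + n * q) = w x := by
      intro q
      induction q with
      | zero => simp
      | succ q ih =>
        intro x
        rw [← ih x, ← hw (x + n * q)]
        congr 1; ring
      | pred q ih =>
        intro x
        rw [← ih x, ← hw (x + n * (-q - 1))]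
        congr 1; ring
    conv_rhs => rw [← Int.emod_add_mul_ediv x n, hz]
  have hδ0 : ∑ y ∈ range n, δ y = 0 := by
    have e1 := sum_range_succ (fun y : ℕ => (v y : ℤ)) n
    have e2 := sum_range_succ' (fun y : ℕ => (v y : ℤ)) n
    have e3 := hv 0
    have e4 := congrArg (Nat.cast : ℕ → ℤ) hsum
    simp only [hδ, sum_sub_distrib]
    push_cast at e1 e2 e3 e4
    rw [zero_add] at e3
    rw [e3] at e1
    linarith
  have hper : ∀ x, h (x + n) = h x := by
    intro x; simp [hh]
  have hstep : ∀ x, h (x + 1) = h x + u x - v (x + 1) := by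
    intro x
    have e1 := hmod u hu x
    have e2 := hmod (fun x => v (x + 1)) (fun x => by
      rw [← hv (x + 1)]; congr 1; ring) x
    have h0 := Int.emod_nonneg x hn'.ne'
    have h1 := Int.emod_lt_of_pos x hn'
    obtain ⟨r, hr⟩ := Int.eq_ofNat_of_zero_le h0
    have hx : (x + 1) % n = ((r : ℤ) + 1) % n := by rw [← hr, Int.emod_add_emod]
    have hd : δ r = u x - v (x + 1) := by
      simp only [hδ]
      rw [← e1, ← e2, hr]
    have hsucc := sum_range_succ (fun y : ℕ => δ y) r
    have : h (x + 1) = h x + δ r := by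
      simp only [hh]
      rw [hx, hr]
      rcases (show (r : ℤ) + 1 < n ∨ r + 1 = n by omega) with h2 | h2
      · rw [Int.emod_eq_of_lt (by omega) h2]
        exact hsucc
      · rw [h2] at hsucc
        have : ((r : ℤ) + 1) % n = 0 := by rw [← h2]; simp
        rw [this]
        simp only [Int.toNat_natCast, Int.toNat_zero, range_zero, sum_empty]
        rw [← hsucc, hδ0]
    rw [this, hd]; ring
  exact ⟨matching h u, isArcs_matching hper hu hn', outDeg_matching hper hn',
    inDeg_matching hstep hper hn'⟩

/-! ### From the polygon to the integer line and back -/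

/-- The lift of a multiplicity function on the edges of the `2n`-gon to the universal cover
`ℤ` of its boundary: every edge `{i, j}` with `j` at most `n` steps clockwise from `i` lifts
to the arcs from the lifts of `i` to those of `j`. A diameter `{a, ā}` thus lifts to arcs
starting at `a` and to arcs starting at `ā`. -/
def liftArcs (n : ℕ) (g : ZMod (2 * n) → ZMod (2 * n) → ℕ) (i j : ℤ) : ℕ :=
  if i < j ∧ j ≤ i + n then g i j else 0

/-- The multiplicity function on directed edges of the `2n`-gon obtained from a family of
periodic arcs: the edge from `i` to `j` is measured clockwise from `i`. -/
def dirArcs (n : ℕ) (G : ℤ → ℤ → ℕ) (i j : ZMod (2 * n)) : ℕ :=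
  G i.val (i.val + (j - i).val)

/-- The inverse of `liftArcs`. At most one direction of `{i, j}` has length at most `n`,
except for a diameter, for which both directions carry the same multiplicity; hence the
maximum. -/
def descArcs (n : ℕ) (G : ℤ → ℤ → ℕ) (i j : ZMod (2 * n)) : ℕ :=
  max (dirArcs n G i j) (dirArcs n G j i)

/-- The number of edges of the `2n`-gon starting at `i`: an edge starts at `i` when its other
endpoint lies at most `n` steps clockwise from `i`. A diameter starts (and ends) at both of its
endpoints, so that every C-edge has two starting points, `i` and its antipode `i + n`. -/
def startDeg (n : ℕ) (g : ZMod (2 * n) → ZMod (2 * n) → ℕ) (i : ZMod (2 * n)) : ℕ :=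
  ∑ l ∈ Icc 1 n, g i (i + (l : ZMod (2 * n)))

/-- The number of edges of the `2n`-gon ending at `j`: those starting at most `n` steps
counterclockwise from `j`. -/
def endDeg (n : ℕ) (g : ZMod (2 * n) → ZMod (2 * n) → ℕ) (j : ZMod (2 * n)) : ℕ :=
  ∑ l ∈ Icc 1 n, g (j - (l : ZMod (2 * n))) j

section transfer

variable {n : ℕ} [NeZero n]

/-- Representatives in a window of length `2n` wrap around at most once; this reduces crossings
in the polygon to linear arithmetic. -/
theorem val_intCast_of_window (i x : ℤ) (h1 : i ≤ x) (h2 : x < i + 2 * n) :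
    ((x : ZMod (2 * n)).val : ℤ) = (i : ZMod (2 * n)).val + (x - i) ∨
    ((x : ZMod (2 * n)).val : ℤ) = (i : ZMod (2 * n)).val + (x - i) - 2 * n := by
  rw [ZMod.val_intCast, ZMod.val_intCast]
  have hn : 0 < n := Nat.pos_of_neZero n
  push_cast
  have a1 := Int.emod_nonneg i (show (2 * (n : ℤ)) ≠ 0 by omega)
  have a2 := Int.emod_lt_of_pos i (show 0 < (2 * (n : ℤ)) by omega)
  have e : x % (2 * n) = (i % (2 * n) + (x - i)) % (2 * n) := by
    rw [Int.emod_add_emod]; congr 1; ring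
  rw [e]
  rcases lt_or_ge (i % (2 * n) + (x - i)) (2 * n) with h | h
  · left; exact Int.emod_eq_of_lt (by omega) h
  · right
    rw [← Int.sub_emod_right]
    exact Int.emod_eq_of_lt (by omega) (by omega)

theorem natCast_two_mul_self (n : ℕ) : (2 * (n : ZMod (2 * n))) = 0 := by
  have := ZMod.natCast_self (2 * n)
  push_cast at this
  exact this

theorem sum_zmod_of_periodic (f : ZMod (2 * n) → ℕ)
    (hf : ∀ i, f (i + (n : ZMod (2 * n))) = f i) :
    ∑ i, f i = 2 * ∑ x ∈ range n, f (x : ZMod (2 * n)) := by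
  rw [sum_zmod_range, ← sum_range_mul_of_periodic (fun x : ℕ => f (x : ZMod (2 * n)))]
  · exact sum_congr (by rw [mul_comm]) fun _ _ => rfl
  · intro x; push_cast; exact hf _

theorem isArcs_liftArcs {g : ZMod (2 * n) → ZMod (2 * n) → ℕ} (hg : IsCMulti n g) :
    IsArcs n (liftArcs n g) := by
  obtain ⟨h1, h2, h3, h4⟩ := hg
  refine ⟨fun i j h => ?_, fun i j => ?_, fun i a j b hia haj hjb => ?_⟩
  · unfold liftArcs at h; split_ifs at h with h'
    · exact h'
    · exact absurd rfl h
  · unfold liftArcs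
    push_cast
    rw [h3]
    congr 1
    apply propext; omega
  · unfold liftArcs
    by_cases c1 : i < j ∧ j ≤ i + n
    · by_cases c2 : a < b ∧ b ≤ a + n
      · rw [if_pos c1, if_pos c2]
        apply h4
        unfold crossE
        have b0 := ZMod.val_lt (i : ZMod (2 * n))
        have b1 := ZMod.val_lt (a : ZMod (2 * n))
        have b2 := ZMod.val_lt (j : ZMod (2 * n))
        have b3 := ZMod.val_lt (b : ZMod (2 * n))
        have e1 := val_intCast_of_window (n := n) i a (by omega) (by omega)
        have e2 := val_intCast_of_window (n := n) i j (by omega) (by omega)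
        have e3 := val_intCast_of_window (n := n) i b (by omega) (by omega)
        omega
      · right; rw [if_neg c2]
    · left; rw [if_neg c1]

omit [NeZero n] in
theorem outDeg_liftArcs (g : ZMod (2 * n) → ZMod (2 * n) → ℕ) (i : ℤ) :
    outDeg n (liftArcs n g) i = startDeg n g i := by
  unfold outDeg startDeg
  refine sum_nbij' (fun j => (j - i).toNat) (fun l => i + l) ?_ ?_ ?_ ?_ ?_
  · intro j; simp only [mem_Ioc, mem_Icc]; omega
  · intro l; simp only [mem_Ioc, mem_Icc]; omega
  · intro j; simp only [mem_Ioc]; omega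
  · intro l; simp
  · intro j hj
    simp only [mem_Ioc] at hj
    have e : (i : ZMod (2 * n)) + (((j - i).toNat : ℕ) : ZMod (2 * n)) = (j : ZMod (2 * n)) := by
      rw [← Int.cast_natCast, ← Int.cast_add]; congr 1; omega
    rw [e, liftArcs, if_pos hj]

omit [NeZero n] in
theorem inDeg_liftArcs (g : ZMod (2 * n) → ZMod (2 * n) → ℕ) (j : ℤ) :
    inDeg n (liftArcs n g) j = endDeg n g j := by
  unfold inDeg endDeg
  refine sum_nbij' (fun i => (j - i).toNat) (fun l => j - l) ?_ ?_ ?_ ?_ ?_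
  · intro i; simp only [mem_Ico, mem_Icc]; omega
  · intro l; simp only [mem_Ico, mem_Icc]; omega
  · intro i; simp only [mem_Ico]; omega
  · intro l; simp
  · intro i hi
    simp only [mem_Ico] at hi
    have e : (j : ZMod (2 * n)) - (((j - i).toNat : ℕ) : ZMod (2 * n)) = (i : ZMod (2 * n)) := by
      rw [← Int.cast_natCast, ← Int.cast_sub]; congr 1; omega
    rw [e, liftArcs, if_pos (by omega)]

theorem liftArcs_injective {g g' : ZMod (2 * n) → ZMod (2 * n) → ℕ} (hg : IsCMulti n g)
    (hg' : IsCMulti n g') (h : liftArcs n g = liftArcs n g') : g = g' := by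
  have hn : 0 < n := Nat.pos_of_neZero n
  have key : ∀ i j : ℤ, i < j → j ≤ i + n → g i j = g' i j := by
    intro i j h1 h2
    have := congrFun (congrFun h i) j
    simpa [liftArcs, h1, h2] using this
  have key2 : ∀ i j : ZMod (2 * n), i.val < j.val → g i j = g' i j := by
    intro i j hij
    have := ZMod.val_lt j
    have ei : (((i.val : ℤ)) : ZMod (2 * n)) = i := by simp
    have ej : (((j.val : ℤ)) : ZMod (2 * n)) = j := by simp
    rcases le_or_gt (j.val : ℤ) (i.val + n) with h1 | h1
    · have := key i.val j.val (by omega) h1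
      rwa [ei, ej] at this
    · have := key j.val (i.val + 2 * n) (by omega) (by omega)
      push_cast at this
      rw [natCast_two_mul_self, add_zero] at this
      rw [hg.1 i j, hg'.1 i j]
      simpa using this
  funext i j
  rcases lt_trichotomy i.val j.val with h1 | h1 | h1
  · exact key2 i j h1
  · rw [ZMod.val_injective _ h1, hg.2.1, hg'.2.1]
  · rw [hg.1, hg'.1]; exact key2 j i h1

theorem IsArcs.per_mul {m : ℤ} {G : ℤ → ℤ → ℕ} (hG : IsArcs m G) (q i j : ℤ) :
    G (i + m * q) (j + m * q) = G i j := by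
  induction q with
  | zero => simp
  | succ q ih =>
    rw [← ih, ← hG.per (i + m * q)]
    congr 1 <;> ring
  | pred q ih =>
    rw [← ih, ← hG.per (i + m * (-q - 1))]
    congr 1 <;> ring

theorem dirArcs_cast {G : ℤ → ℤ → ℕ} (hG : IsArcs n G) (a b : ℤ) (h1 : a ≤ b)
    (h2 : b < a + 2 * n) : dirArcs n G a b = G a b := by
  have e : (((b : ZMod (2 * n)) - (a : ZMod (2 * n))).val : ℤ) = b - a := by
    rw [← Int.cast_sub, ZMod.val_intCast]
    push_cast
    exact Int.emod_eq_of_lt (by omega) (by omega)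
  unfold dirArcs
  rw [e, ZMod.val_intCast, ← hG.per_mul (2 * (a / (2 * n))) (a % _)]
  have := Int.emod_add_mul_ediv a (2 * n)
  push_cast
  congr 1 <;> linarith

theorem dirArcs_val {G : ℤ → ℤ → ℕ} (hG : IsArcs n G) (i j : ZMod (2 * n))
    (h : i.val < j.val) :
    dirArcs n G i j = G i.val j.val ∧ dirArcs n G j i = G j.val (i.val + 2 * n) := by
  have := ZMod.val_lt j
  have h1 := dirArcs_cast hG i.val j.val (by omega) (by omega)
  have h2 := dirArcs_cast hG j.val (i.val + 2 * n) (by omega) (by omega)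
  simp only [Int.cast_add, Int.cast_mul, Int.cast_natCast, Int.cast_ofNat, natCast_two_mul_self,
    add_zero, ZMod.natCast_zmod_val] at h1 h2
  exact ⟨h1, h2⟩

theorem dirArcs_add {G : ℤ → ℤ → ℕ} (hG : IsArcs n G) (t : ℕ)
    (ht : ∀ i j, G (i + t) (j + t) = G i j) (i j : ZMod (2 * n)) :
    dirArcs n G (i + t) (j + t) = dirArcs n G i j := by
  have hlt := ZMod.val_lt (j - i)
  have h1 := dirArcs_cast hG i.val (i.val + (j - i).val) (by omega) (by omega)
  have h2 := dirArcs_cast hG (i.val + t) (i.val + (j - i).val + t) (by omega) (by omega)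
  push_cast at h1 h2
  rw [ht, ← h1] at h2
  simpa using h2

omit [NeZero n] in
theorem descArcs_symm (G : ℤ → ℤ → ℕ) (i j : ZMod (2 * n)) :
    descArcs n G i j = descArcs n G j i := max_comm _ _

theorem descArcs_nc {G : ℤ → ℤ → ℕ} (hG : IsArcs n G) (i a j b : ZMod (2 * n))
    (h1 : i.val < a.val) (h2 : a.val < j.val) (h3 : j.val < b.val) :
    descArcs n G i j = 0 ∨ descArcs n G a b = 0 := by
  have hb := ZMod.val_lt b
  unfold descArcs
  obtain ⟨e1, e2⟩ := dirArcs_val hG i j (by omega)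
  obtain ⟨e3, e4⟩ := dirArcs_val hG a b (by omega)
  rw [e1, e2, e3, e4]
  have c1 := hG.nc i.val a.val j.val b.val (by omega) (by omega) (by omega)
  have c2 := hG.nc (b.val - 2 * n) i.val a.val j.val (by omega) (by omega) (by omega)
  have c3 := hG.nc a.val j.val b.val (i.val + 2 * n) (by omega) (by omega) (by omega)
  have c4 := hG.nc j.val b.val (i.val + 2 * n) (a.val + 2 * n) (by omega) (by omega) (by omega)
  have e5 := hG.per_mul 2 (b.val - 2 * n) a.val
  rw [show (b.val : ℤ) - 2 * n + n * 2 = b.val by ring,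
    show (a.val : ℤ) + n * 2 = a.val + 2 * n by ring] at e5
  omega

theorem isCMulti_descArcs {G : ℤ → ℤ → ℕ} (hG : IsArcs n G) : IsCMulti n (descArcs n G) := by
  refine ⟨descArcs_symm G, fun i => ?_, fun i j => ?_, fun i j a b h => ?_⟩
  · unfold descArcs dirArcs
    simp only [sub_self, ZMod.val_zero, Nat.cast_zero, add_zero, max_self]
    by_contra h0
    have := hG.supp _ _ h0
    omega
  · unfold descArcs
    rw [dirArcs_add hG n hG.per, dirArcs_add hG n hG.per]
  · have key : ∀ i j a b : ZMod (2 * n), min i.val j.val < min a.val b.val →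
        min a.val b.val < max i.val j.val → max i.val j.val < max a.val b.val →
        descArcs n G i j = 0 ∨ descArcs n G a b = 0 := by
      intro i j a b h1 h2 h3
      rcases le_total i.val j.val with c | c <;> rcases le_total a.val b.val with c' | c' <;>
        simp only [c, c', min_eq_left, min_eq_right, max_eq_left, max_eq_right] at h1 h2 h3
      · exact descArcs_nc hG i a j b h1 h2 h3
      · rw [descArcs_symm G a b]; exact descArcs_nc hG i b j a h1 h2 h3
      · rw [descArcs_symm G i j]; exact descArcs_nc hG j a i b h1 h2 h3
      · rw [descArcs_symm G i j, descArcs_symm G a b]; exact descArcs_nc hG j b i a h1 h2 h3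
    rcases h with ⟨h1, h2, h3⟩ | ⟨h1, h2, h3⟩
    · exact key i j a b h1 h2 h3
    · exact (key a b i j h1 h2 h3).symm

theorem liftArcs_descArcs {G : ℤ → ℤ → ℕ} (hG : IsArcs n G) :
    liftArcs n (descArcs n G) = G := by
  funext a b
  unfold liftArcs
  split_ifs with h
  · have h1 := dirArcs_cast hG a b (by omega) (by omega)
    have h2 := dirArcs_cast hG b (a + 2 * n) (by omega) (by omega)
    push_cast at h2
    rw [natCast_two_mul_self, add_zero] at h2
    unfold descArcs
    rw [h1, h2]
    -- the opposite direction is too long to be an arc, unless the edge is a diameter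
    have : G b (a + 2 * n) = 0 ∨ G b (a + 2 * n) = G a b := by
      by_cases hb : b = a + n
      · right
        rw [hb, ← hG.per a (a + n)]; congr 1; ring
      · left
        by_contra h0
        have := hG.supp _ _ h0
        omega
    omega
  · by_contra h0
    exact h (hG.supp a b fun e => h0 e.symm)

/-- Each C-edge has two starting points, counted in `ZMod (2 * n)`. -/
theorem cEdges2_eq {g : ZMod (2 * n) → ZMod (2 * n) → ℕ} (hg : IsCMulti n g) :
    cEdges2 n g = ∑ i, startDeg n g i := by
  have hn : 0 < n := Nat.pos_of_neZero n
  obtain ⟨h1, h2, h3, -⟩ := hg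
  set A : ℕ → ℕ := fun l => ∑ i : ZMod (2 * n), g i (i + (l : ZMod (2 * n))) with hA
  have hT : ∑ i, startDeg n g i = ∑ l ∈ Icc 1 n, A l := by
    unfold startDeg; rw [sum_comm]
  have hA0 : A 0 = 0 := by simp [hA, h2]
  have hArefl : ∀ l, l ≤ 2 * n → A (2 * n - l) = A l := by
    intro l hl
    simp only [hA]
    rw [← Equiv.sum_comp (Equiv.addRight (l : ZMod (2 * n)))]
    refine sum_congr rfl fun i _ => ?_
    rw [h1]
    congr 1
    simp only [Equiv.coe_addRight]
    rw [Nat.cast_sub hl, ZMod.natCast_self]; ring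
  have hAn : A n = 2 * ∑ a ∈ range n, g (a : ZMod (2 * n)) ((a : ZMod (2 * n)) + n) := by
    simp only [hA]
    exact sum_zmod_of_periodic _ fun x => h3 _ _
  have hS : 2 * (∑ i ∈ range (2 * n), ∑ j ∈ range (2 * n),
      if i < j then g (i : ZMod (2 * n)) (j : ZMod (2 * n)) else 0) =
      ∑ l ∈ range (2 * n), A l := by
    have e1 : ∑ l ∈ range (2 * n), A l = ∑ i : ZMod (2 * n), ∑ j : ZMod (2 * n), g i j := by
      simp only [hA]
      rw [sum_comm]
      refine sum_congr rfl fun i _ => ?_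
      rw [← Equiv.sum_comp (Equiv.addLeft i), sum_zmod_range]
      simp
    rw [e1, sum_zmod_range]
    simp only [sum_zmod_range]
    rw [two_mul]
    nth_rewrite 2 [sum_comm]
    simp only [← sum_add_distrib]
    refine sum_congr rfl fun i _ => sum_congr rfl fun j _ => ?_
    rcases lt_trichotomy i j with h | rfl | h
    · simp [h, not_lt.2 h.le]
    · simp [h2]
    · simp [h, not_lt.2 h.le, h1]
  have e2 : ∑ l ∈ range (2 * n), A l =
      A 0 + ∑ l ∈ Ico 1 n, A l + A n + ∑ l ∈ Ico (n + 1) (2 * n), A l := by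
    rw [range_eq_Ico, sum_eq_sum_Ico_succ_bot (by omega),
      ← sum_Ico_consecutive A (show 0 + 1 ≤ n by omega) (show n ≤ 2 * n by omega),
      sum_eq_sum_Ico_succ_bot (show n < 2 * n by omega)]
    ring
  have e3 : ∑ l ∈ Ico (n + 1) (2 * n), A l = ∑ l ∈ Ico 1 n, A l := by
    refine sum_nbij' (fun l => 2 * n - l) (fun l => 2 * n - l) ?_ ?_ ?_ ?_ ?_
    · intro l; simp only [mem_Ico]; omega
    · intro l; simp only [mem_Ico]; omega
    · intro l; simp only [mem_Ico]; omega
    · intro l; simp only [mem_Ico]; omega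
    · intro l hl; rw [mem_Ico] at hl; exact (hArefl l (by omega)).symm
  have e4 : ∑ l ∈ Icc 1 n, A l = ∑ l ∈ Ico 1 n, A l + A n :=
    (sum_Ico_succ_top (show 1 ≤ n by omega) A)
  unfold cEdges2
  rw [hT]
  omega

theorem sum_endDeg (g : ZMod (2 * n) → ZMod (2 * n) → ℕ) :
    ∑ j, endDeg n g j = ∑ i, startDeg n g i := by
  unfold startDeg endDeg
  rw [sum_comm, sum_comm (s := univ)]
  refine sum_congr rfl fun l _ => ?_
  rw [← Equiv.sum_comp (Equiv.addRight (l : ZMod (2 * n)))]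
  simp

omit [NeZero n] in
theorem startDeg_add {g : ZMod (2 * n) → ZMod (2 * n) → ℕ} (t : ZMod (2 * n))
    (h : ∀ i j, g (i + t) (j + t) = g i j) (i : ZMod (2 * n)) :
    startDeg n g (i + t) = startDeg n g i := by
  unfold startDeg
  refine sum_congr rfl fun l _ => ?_
  rw [← h i]; congr 1; ring

omit [NeZero n] in
theorem endDeg_add {g : ZMod (2 * n) → ZMod (2 * n) → ℕ} (t : ZMod (2 * n))
    (h : ∀ i j, g (i + t) (j + t) = g i j) (j : ZMod (2 * n)) :
    endDeg n g (j + t) = endDeg n g j := by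
  unfold endDeg
  refine sum_congr rfl fun l _ => ?_
  rw [← h _ j]; congr 1; ring

theorem isArcs_translate {m : ℤ} {G : ℤ → ℤ → ℕ} (hG : IsArcs m G) (t : ℤ) :
    IsArcs m fun i j => G (i + t) (j + t) := by
  refine ⟨fun i j h => ?_, fun i j => ?_, fun i a j b h1 h2 h3 =>
    hG.nc _ _ _ _ (by omega) (by omega) (by omega)⟩
  · have := hG.supp _ _ h; omega
  · rw [← hG.per (i + t)]; congr 1 <;> ring

theorem outDeg_translate (m : ℤ) (G : ℤ → ℤ → ℕ) (t i : ℤ) :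
    outDeg m (fun i j => G (i + t) (j + t)) i = outDeg m G (i + t) := by
  unfold outDeg
  refine sum_nbij' (· + t) (· - t) ?_ ?_ ?_ ?_ ?_ <;> intro j <;>
    simp only [mem_Ioc, add_sub_cancel_right, sub_add_cancel, implies_true] <;> omega

theorem inDeg_translate (m : ℤ) (G : ℤ → ℤ → ℕ) (t j : ℤ) :
    inDeg m (fun i j => G (i + t) (j + t)) j = inDeg m G (j + t) := by
  unfold inDeg
  refine sum_nbij' (· + t) (· - t) ?_ ?_ ?_ ?_ ?_ <;> intro i <;>
    simp only [mem_Ico, add_sub_cancel_right, sub_add_cancel, implies_true] <;> omega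

/-- Sending a C-multidissection to its multiset of starting points and its multiset of ending
points, both modulo `n`, is a bijection onto pairs of multisets of the same size. It is compatible
with rotation, so it restricts to the fixed points of the `d`-th power of the rotation. -/
theorem card_fixed (n k d : ℕ) [NeZero n] :
    Nat.card {g : ZMod (2 * n) → ZMod (2 * n) → ℕ //
      IsCMulti n g ∧ cEdges2 n g = 2 * k ∧
      ∀ i j, g (i + (d : ZMod (2 * n))) (j + (d : ZMod (2 * n))) = g i j} =
    Nat.card (PerFun n k d) * Nat.card (PerFun n k d) := by
  have hn : 0 < n := Nat.pos_of_neZero n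
  rw [← Nat.card_prod]
  refine Nat.card_eq_of_bijective (fun g =>
    (⟨startDeg n g.1, startDeg_add _ g.2.1.2.2.1, startDeg_add _ g.2.2.2, ?_⟩,
     ⟨endDeg n g.1, endDeg_add _ g.2.1.2.2.1, endDeg_add _ g.2.2.2, ?_⟩)) ⟨?_, ?_⟩
  · rw [← cEdges2_eq g.2.1, g.2.2.1]
  · rw [sum_endDeg, ← cEdges2_eq g.2.1, g.2.2.1]
  · rintro ⟨g, hg, hk, hd⟩ ⟨g', hg', hk', hd'⟩ h
    have h1 := congrArg (fun p => p.1.1) h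
    have h2 := congrArg (fun p => p.2.1) h
    simp only at h1 h2
    apply Subtype.ext
    refine liftArcs_injective hg hg' (arcs_ext (isArcs_liftArcs hg) (isArcs_liftArcs hg')
      (by omega) ?_ ?_)
    · intro i; rw [outDeg_liftArcs, outDeg_liftArcs, h1]
    · intro i; rw [inDeg_liftArcs, inDeg_liftArcs, h2]
  · rintro ⟨⟨u, hu1, hu2, hu3⟩, ⟨v, hv1, hv2, hv3⟩⟩
    have hhalf : ∀ w : ZMod (2 * n) → ℕ, (∀ i, w (i + (n : ZMod (2 * n))) = w i) →
        ∑ i, w i = 2 * k → ∑ x ∈ range n, w ((x : ℤ) : ZMod (2 * n)) = k := by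
      intro w h1 h2
      rw [sum_zmod_of_periodic w h1] at h2
      simp only [Int.cast_natCast]; omega
    obtain ⟨G, hG, hGo, hGi⟩ := exists_arcs n hn (fun x => u x) (fun x => v x)
      (fun x => by push_cast; exact hu1 _) (fun x => by push_cast; exact hv1 _)
      ((hhalf u hu1 hu3).trans (hhalf v hv1 hv3).symm)
    -- uniqueness makes the matching as symmetric as the data
    have hGd : (fun i j => G (i + d) (j + d)) = G := by
      refine arcs_ext (isArcs_translate hG d) hG (by omega) ?_ ?_
      · intro i; rw [outDeg_translate, hGo, hGo]; push_cast; exact hu2 _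
      · intro i; rw [inDeg_translate, hGi, hGi]; push_cast; exact hv2 _
    have hM := isCMulti_descArcs hG
    have hs : startDeg n (descArcs n G) = u := by
      funext i
      have := outDeg_liftArcs (descArcs n G) i.val
      rw [liftArcs_descArcs hG, hGo] at this
      simpa using this.symm
    have he : endDeg n (descArcs n G) = v := by
      funext i
      have := inDeg_liftArcs (descArcs n G) i.val
      rw [liftArcs_descArcs hG, hGi] at this
      simpa using this.symm
    refine ⟨⟨descArcs n G, hM, ?_, fun i j => ?_⟩, ?_⟩
    · rw [cEdges2_eq hM, hs, hu3]
    · have := dirArcs_add hG d fun i j => congrFun (congrFun hGd i) j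
      unfold descArcs
      rw [this, this]
    · simp only [hs, he]

end transfer

/-- Theorem 3.4.  Let `n ≥ 2` and `k ≥ 0`.  The set of
C-multidissections of `P_{2n}` with exactly `k` edges, with `Z_n` acting by rotation,
and `X(q) = h_k(1,q,…,q^{n−1})²`, exhibits the cyclic sieving phenomenon: for every
`d ≥ 0` the number of C-multidissections fixed by the `d`-th power of rotation equals
`h_k(1,ζ^d,…,ζ^{(n−1)d})²` with `ζ = e^{2πi/n}`. -/
theorem statement10 (n k : ℕ) (hn : 2 ≤ n) :
    ∀ d : ℕ,
      (Nat.card {g : ZMod (2*n) → ZMod (2*n) → ℕ //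
          IsCMulti n g ∧ cEdges2 n g = 2 * k ∧
          ∀ i j, g (i + (d : ZMod (2*n))) (j + (d : ZMod (2*n))) = g i j} : ℂ) =
        hh n k (fun i : Fin n => Complex.exp (2 * Real.pi * Complex.I / n) ^ (d * (i : ℕ))) *
          hh n k (fun i : Fin n => Complex.exp (2 * Real.pi * Complex.I / n) ^ (d * (i : ℕ))) := by
  intro d
  have : NeZero n := ⟨by omega⟩
  rw [card_fixed, Nat.cast_mul, card_perFun]
end

section
/- Let n ≥ 2 and k ≥ 0. Identifying polynomials in 𝒜_{n+2} with their images in V^D(n) = 𝒜_{n+2}/(Δ_{n+1,n+2}), the set {z_f^A}, where f ranges over all A-multidissections of P_{n+2} with f({n+1,n+2}) = 0 and with exactly k endpoints (counted with multiplicity) in {1,…,n}, is a ℂ-basis of V^D(n,k), the D-degree-k homogeneous component of V^D(n). -/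
/-! The cluster monomials `z_f`, for `f` running over all noncrossing multigraphs on the vertices
of the `m`-gon, form a basis of the Plücker algebra `𝒜_m`; the result for the quotient follows,
because multiplication by the boundary minor sends basis monomials to basis monomials.

*Spanning* (`Asub_le_ncSpan`). The algebra is spanned by the monomials of all multigraphs. If two
edges cross, the Plücker relation `Δ_{ac}Δ_{bd} = Δ_{ab}Δ_{cd} + Δ_{ad}Δ_{bc}` replaces the two
diagonals of a quadrilateral by pairs of opposite sides. With the strictly concave edge length
`d (m - d)` the total length drops, so the rewriting terminates.

*Independence* (`linearIndependent_zBasis`). For the lexicographic order `rowOrder`, the leading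
monomial of `Δ_{ij}`, `i < j`, is `x_{i1} x_{j2}`. So the leading monomial of `z_f` records how
many edges open and how many close at each vertex, and this determines a noncrossing `f`
(`eq_of_degree_eq`), just as a word of parentheses determines its matching: at a shortest edge
`{i,j}` where `f` exceeds `g`, equality of the counts at `i` and `j` forces longer edges `{i,j'}`
and `{i',j}` in `g`, and these cross.

*Quotient*. The edge `{n+1,n+2}` crosses nothing, so `Δ_{n+1,n+2} z_f` is again a basis monomial,
and the ideal is the span of the `z_f` with `f({n+1,n+2}) ≠ 0` (`JD_le_span`, `zA_mem_JD`). The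
remaining monomials thus map to a basis of the quotient. Each `z_f` is homogeneous of D-degree
`dEndCount n f`, so the basis splits along the grading. -/

open Finset

/-- An A-multidissection of the `n`-gon `P_n` (vertices labeled clockwise by `ZMod n`),
encoded as a symmetric function `f` on ordered pairs of vertices (`f i j` is the
multiplicity of the edge `{i,j}`): whenever two edges cross, one of them has
multiplicity `0`. -/
def IsAMulti (n : ℕ) (f : ZMod n → ZMod n → ℕ) : Prop :=
  (∀ i j, f i j = f j i) ∧ (∀ i, f i i = 0) ∧
  (∀ i j a b, crossE i j a b → f i j = 0 ∨ f a b = 0)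

/-- The number of edges of an A-multidissection, counted with multiplicity. -/
def aEdges (n : ℕ) (f : ZMod n → ZMod n → ℕ) : ℕ :=
  ∑ i ∈ Finset.range n, ∑ j ∈ Finset.range n,
    if i < j then f (i : ZMod n) (j : ZMod n) else 0

/-- The 2×2 minor `Δ_{ij} = x_{i1}x_{j2} − x_{j1}x_{i2}` of the `n×2` matrix of
variables `x = (x_{ij})`, the rows being indexed by `ZMod n` and columns by `Fin 2`. -/
noncomputable def Dmin (n : ℕ) (i j : ZMod n) : MvPolynomial (ZMod n × Fin 2) ℂ :=
  MvPolynomial.X (i, 0) * MvPolynomial.X (j, 1) - MvPolynomial.X (j, 0) * MvPolynomial.X (i, 1)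

/-- The cluster monomial `z_f^A = ∏_{e={i,j}, i<j} Δ_{ij}^{f(e)}` associated to an
A-multidissection `f`. -/
noncomputable def zA (n : ℕ) (f : ZMod n → ZMod n → ℕ) : MvPolynomial (ZMod n × Fin 2) ℂ :=
  ∏ i ∈ Finset.range n, ∏ j ∈ Finset.range n,
    if i < j then Dmin n (i : ZMod n) (j : ZMod n) ^ f (i : ZMod n) (j : ZMod n) else 1

/-- The subalgebra `𝒜_n ⊆ ℂ[x]` generated by the 2×2 minors `Δ_{ij}` (`i < j`). -/
noncomputable def Asub (n : ℕ) : Subalgebra ℂ (MvPolynomial (ZMod n × Fin 2) ℂ) :=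
  Algebra.adjoin ℂ {p | ∃ i j : ZMod n, i.val < j.val ∧ p = Dmin n i j}

lemma Dmin_mem {n : ℕ} {i j : ZMod n} (h : i.val < j.val) : Dmin n i j ∈ Asub n :=
  Algebra.subset_adjoin ⟨i, j, h, rfl⟩

lemma zA_mem (n : ℕ) (f : ZMod n → ZMod n → ℕ) : zA n f ∈ Asub n := by
  refine prod_mem fun i hi => prod_mem fun j hj => ?_
  simp only [Finset.mem_range] at hi hj
  haveI : NeZero n := ⟨by omega⟩
  split_ifs with h
  · refine pow_mem (Dmin_mem ?_) _
    rw [ZMod.val_natCast, ZMod.val_natCast, Nat.mod_eq_of_lt hi, Nat.mod_eq_of_lt hj]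
    exact h
  · exact one_mem _

set_option maxHeartbeats 1000000
set_option synthInstance.maxHeartbeats 1000000

lemma deltaD_val (n : ℕ) :
    (((n : ℕ) : ZMod (n+2))).val < ((((n+1 : ℕ)) : ZMod (n+2))).val := by
  haveI : NeZero (n+2) := ⟨by omega⟩
  rw [ZMod.val_natCast, ZMod.val_natCast, Nat.mod_eq_of_lt (by omega),
    Nat.mod_eq_of_lt (by omega)]
  omega

/-- The minor `Δ_{n+1,n+2}` of the `(n+2)×2` matrix of variables, as an element of the
subalgebra `𝒜_{n+2}` (rows indexed by `ZMod (n+2)`, so that the rows labeled `n+1` and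
`n+2` are `n` and `n+1`). -/
noncomputable def deltaD (n : ℕ) : Asub (n+2) :=
  ⟨Dmin (n+2) ((n : ℕ) : ZMod (n+2)) (((n+1 : ℕ)) : ZMod (n+2)), Dmin_mem (deltaD_val n)⟩

/-- The ideal of `𝒜_{n+2}` generated by the minor `Δ_{n+1,n+2}`; `V^D(n)` is the
quotient `𝒜_{n+2} ⧸ JD n`. -/
noncomputable def JD (n : ℕ) : Ideal (Asub (n+2)) := Ideal.span {deltaD n}

/-- The D-degree weight on variables: `x_{ij}` has D-degree `1` if `1 ≤ i ≤ n` and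
`0` if `i ∈ {n+1, n+2}`. -/
def wD (n : ℕ) : ZMod (n+2) × Fin 2 → ℕ := fun p => if p.1.val < n then 1 else 0

/-- `V^D(n,k)`: the D-degree-`k` homogeneous component of `V^D(n) = 𝒜_{n+2} ⧸ JD n`,
i.e. the image in the quotient of the D-degree-`k` homogeneous elements of `𝒜_{n+2}`. -/
noncomputable def VDk (n k : ℕ) : Submodule ℂ (Asub (n+2) ⧸ JD n) :=
  Submodule.map (Ideal.Quotient.mkₐ ℂ (JD n)).toLinearMap
    (Submodule.comap (Subalgebra.val (Asub (n+2))).toLinearMap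
      (MvPolynomial.weightedHomogeneousSubmodule ℂ (wD n) k))

/-- The number of endpoints of an A-multidissection of `P_{n+2}` lying in `{1,…,n}`,
counted with multiplicity. -/
def dEndCount (n : ℕ) (f : ZMod (n+2) → ZMod (n+2) → ℕ) : ℕ :=
  ∑ i ∈ Finset.range (n+2), ∑ j ∈ Finset.range (n+2),
    if i < j then
      f ((i : ℕ) : ZMod (n+2)) ((j : ℕ) : ZMod (n+2)) *
        ((if i < n then 1 else 0) + (if j < n then 1 else 0))
    else 0

/-! ### Cluster monomials as products over increasing pairs -/

/-- The edges of the polygon, each listed once with its endpoints in increasing order. -/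
def edgePairs (m : ℕ) [NeZero m] : Finset (ZMod m × ZMod m) :=
  univ.filter fun p => p.1.val < p.2.val

lemma prod_range_eq_prod_zmod {M : Type*} [CommMonoid M] (m : ℕ) [NeZero m] (F : ℕ → M) :
    ∏ i ∈ range m, F i = ∏ i : ZMod m, F i.val := by
  refine Finset.prod_bij' (fun i _ => (i : ZMod m)) (fun i _ => i.val) ?_ ?_ ?_ ?_ ?_
  · simp
  · intro i _; simpa using ZMod.val_lt i
  · intro i hi; exact ZMod.val_cast_of_lt (by simpa using hi)
  · intro i _; exact ZMod.natCast_zmod_val i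
  · intro i hi; rw [ZMod.val_cast_of_lt (by simpa using hi)]

lemma zA_eq (m : ℕ) [NeZero m] (f : ZMod m → ZMod m → ℕ) :
    zA m f = ∏ p ∈ edgePairs m, Dmin m p.1 p.2 ^ f p.1 p.2 := by
  rw [zA, prod_range_eq_prod_zmod, edgePairs, Finset.prod_filter, Fintype.prod_prod_type]
  refine Finset.prod_congr rfl fun i _ => ?_
  rw [prod_range_eq_prod_zmod]
  simp only [ZMod.natCast_zmod_val]

lemma zA_zero (m : ℕ) [NeZero m] : zA m 0 = 1 := by
  simp [zA_eq]

lemma zA_add (m : ℕ) [NeZero m] (f g : ZMod m → ZMod m → ℕ) :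
    zA m (f + g) = zA m f * zA m g := by
  simp [zA_eq, pow_add, Finset.prod_mul_distrib]

/-- The multigraph with the single edge `{a,b}`, of multiplicity one. -/
def edgeFn {m : ℕ} (a b : ZMod m) : ZMod m → ZMod m → ℕ :=
  fun i j => if (i = a ∧ j = b) ∨ (i = b ∧ j = a) then 1 else 0

lemma edgeFn_symm {m : ℕ} (a b i j : ZMod m) : edgeFn a b i j = edgeFn a b j i := by
  unfold edgeFn
  congr 1
  apply propext
  tauto

lemma edgeFn_diag {m : ℕ} {a b : ZMod m} (h : a ≠ b) (i : ZMod m) : edgeFn a b i i = 0 := by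
  unfold edgeFn
  rw [if_neg]
  rintro (⟨rfl, h'⟩ | ⟨rfl, h'⟩)
  · exact h h'
  · exact h h'.symm

lemma edgeFn_eq_zero {m : ℕ} {a b : ZMod m} (h : a.val < b.val) {p : ZMod m × ZMod m}
    (hp : p.1.val < p.2.val) (hne : p ≠ (a, b)) : edgeFn a b p.1 p.2 = 0 := by
  unfold edgeFn
  rw [if_neg]
  rintro (⟨h1, h2⟩ | ⟨h1, h2⟩)
  · exact hne (Prod.ext h1 h2)
  · rw [h1, h2] at hp
    omega

lemma edgeFn_self {m : ℕ} (a b : ZMod m) : edgeFn a b a b = 1 := by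
  simp [edgeFn]

lemma zA_edgeFn {m : ℕ} [NeZero m] {a b : ZMod m} (h : a.val < b.val) :
    zA m (edgeFn a b) = Dmin m a b := by
  rw [zA_eq, Finset.prod_eq_single (a, b)]
  · simp [edgeFn_self]
  · intro p hp hne
    rw [edgeFn_eq_zero h (by simpa [edgePairs] using hp) hne, pow_zero]
  · intro hn
    exact absurd (by simpa [edgePairs] using h) hn

/-! ### Straightening: noncrossing monomials span -/

/-- The total strictly concave length of a multigraph, an edge joining vertices at distance `d`
along the boundary having length `d * (m - d)`. Replacing two crossing diagonals of a
quadrilateral by two opposite sides decreases it. -/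
def totalLength (m : ℕ) [NeZero m] (f : ZMod m → ZMod m → ℕ) : ℕ :=
  ∑ p ∈ edgePairs m, f p.1 p.2 * ((p.2.val - p.1.val) * (m - (p.2.val - p.1.val)))

lemma totalLength_add (m : ℕ) [NeZero m] (f g : ZMod m → ZMod m → ℕ) :
    totalLength m (f + g) = totalLength m f + totalLength m g := by
  simp [totalLength, add_mul, Finset.sum_add_distrib]

lemma totalLength_edgeFn {m : ℕ} [NeZero m] {a b : ZMod m} (h : a.val < b.val) :
    totalLength m (edgeFn a b) = (b.val - a.val) * (m - (b.val - a.val)) := by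
  rw [totalLength, Finset.sum_eq_single (a, b)]
  · simp [edgeFn_self]
  · intro p hp hne
    rw [edgeFn_eq_zero h (by simpa [edgePairs] using hp) hne, zero_mul]
  · intro hn
    exact absurd (by simpa [edgePairs] using h) hn

/-- The three-term Plücker relation. -/
lemma plucker (m : ℕ) (a b c d : ZMod m) :
    Dmin m a c * Dmin m b d = Dmin m a b * Dmin m c d + Dmin m a d * Dmin m b c := by
  unfold Dmin
  ring

/-- Symmetric and without loops: the multigraphs on the polygon, crossings allowed. -/
def IsMultigraph {m : ℕ} (f : ZMod m → ZMod m → ℕ) : Prop :=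
  (∀ i j, f i j = f j i) ∧ ∀ i, f i i = 0

lemma IsMultigraph.add {m : ℕ} {f g : ZMod m → ZMod m → ℕ} (hf : IsMultigraph f)
    (hg : IsMultigraph g) : IsMultigraph (f + g) :=
  ⟨fun i j => by simp [hf.1 i j, hg.1 i j], fun i => by simp [hf.2 i, hg.2 i]⟩

lemma isMultigraph_edgeFn {m : ℕ} {a b : ZMod m} (h : a.val < b.val) :
    IsMultigraph (edgeFn a b) :=
  ⟨edgeFn_symm a b, edgeFn_diag (by rintro rfl; omega)⟩

/-- A crossing pair of edges, each reordered increasingly and the two listed by left endpoint. -/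
lemma exists_crossing {m : ℕ} {f : ZMod m → ZMod m → ℕ} (hf : IsMultigraph f)
    (h : ¬ IsAMulti m f) : ∃ a b c d : ZMod m, a.val < b.val ∧ b.val < c.val ∧
      c.val < d.val ∧ 0 < f a c ∧ 0 < f b d := by
  have h' : ∃ i j a b, crossE i j a b ∧ f i j ≠ 0 ∧ f a b ≠ 0 := by
    by_contra hc
    push Not at hc
    refine h ⟨hf.1, hf.2, fun i j a b hx => ?_⟩
    by_contra hn
    push Not at hn
    exact hn.2 (hc i j a b hx hn.1)
  obtain ⟨i, j, a, b, hx, h1, h2⟩ := h'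
  have key : ∀ i j : ZMod m, f i j ≠ 0 → ∃ p q : ZMod m,
      p.val = min i.val j.val ∧ q.val = max i.val j.val ∧ 0 < f p q := by
    intro i j hij
    rcases le_total i.val j.val with hl | hl
    · exact ⟨i, j, (min_eq_left hl).symm, (max_eq_right hl).symm, Nat.pos_of_ne_zero hij⟩
    · exact ⟨j, i, (min_eq_right hl).symm, (max_eq_left hl).symm,
        Nat.pos_of_ne_zero (hf.1 i j ▸ hij)⟩
  obtain ⟨p, q, hp, hq, hpq⟩ := key i j h1
  obtain ⟨r, s, hr, hs, hrs⟩ := key a b h2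
  unfold crossE at hx
  rw [← hp, ← hq, ← hr, ← hs] at hx
  rcases hx with ⟨x, y, z⟩ | ⟨x, y, z⟩
  · exact ⟨p, r, q, s, x, y, z, hpq, hrs⟩
  · exact ⟨r, p, s, q, x, y, z, hrs, hpq⟩

/-- Two crossing edges present in a multigraph can be split off. -/
lemma exists_split {m : ℕ} {f : ZMod m → ZMod m → ℕ} (hf : IsMultigraph f)
    {a b c d : ZMod m} (h1 : a.val < b.val) (h2 : b.val < c.val) (h3 : c.val < d.val)
    (hac : 0 < f a c) (hbd : 0 < f b d) :
    ∃ g, IsMultigraph g ∧ f = g + (edgeFn a c + edgeFn b d) := by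
  have hle : ∀ i j, (edgeFn a c + edgeFn b d) i j ≤ f i j := by
    intro i j
    have hab : a ≠ b := by rintro rfl; omega
    have had : a ≠ d := by rintro rfl; omega
    have hca := hf.1 a c
    have hdb := hf.1 b d
    simp only [Pi.add_apply]
    unfold edgeFn
    split_ifs with u v v
    · exfalso
      rcases u with ⟨u1, u2⟩ | ⟨u1, u2⟩ <;> rcases v with ⟨v1, v2⟩ | ⟨v1, v2⟩ <;> subst u1 u2
      · exact hab v1
      · exact had v1
      · exact had v2
      · exact hab v2
    · rcases u with ⟨rfl, rfl⟩ | ⟨rfl, rfl⟩ <;> omega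
    · rcases v with ⟨rfl, rfl⟩ | ⟨rfl, rfl⟩ <;> omega
    · omega
  have hE : IsMultigraph (edgeFn a c + edgeFn b d) :=
    (isMultigraph_edgeFn (by omega)).add (isMultigraph_edgeFn (by omega))
  refine ⟨f - (edgeFn a c + edgeFn b d), ⟨fun i j => ?_, fun i => ?_⟩, ?_⟩
  · change f i j - _ = f j i - _
    rw [hf.1 i j, hE.1 i j]
  · change f i i - _ = 0
    rw [hf.2 i, Nat.zero_sub]
  · funext i j
    exact (Nat.sub_add_cancel (hle i j)).symm

/-- The span of the monomials of noncrossing multigraphs. -/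
noncomputable def ncSpan (m : ℕ) : Submodule ℂ (MvPolynomial (ZMod m × Fin 2) ℂ) :=
  Submodule.span ℂ {p | ∃ f, IsAMulti m f ∧ p = zA m f}

lemma zA_mem_ncSpan (m : ℕ) [NeZero m] (L : ℕ) : ∀ f : ZMod m → ZMod m → ℕ,
    IsMultigraph f → totalLength m f = L → zA m f ∈ ncSpan m := by
  induction L using Nat.strong_induction_on with
  | _ L ih =>
  intro f hf hL
  by_cases hA : IsAMulti m f
  · exact Submodule.subset_span ⟨f, hA, rfl⟩
  obtain ⟨a, b, c, d, h1, h2, h3, hac, hbd⟩ := exists_crossing hf hA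
  obtain ⟨g, hg, rfl⟩ := exists_split hf h1 h2 h3 hac hbd
  have e : zA m (g + (edgeFn a c + edgeFn b d)) =
      zA m (g + (edgeFn a b + edgeFn c d)) + zA m (g + (edgeFn a d + edgeFn b c)) := by
    simp only [zA_add]
    rw [zA_edgeFn (show a.val < c.val by omega), zA_edgeFn (show b.val < d.val by omega),
      zA_edgeFn h1, zA_edgeFn h3, zA_edgeFn (show a.val < d.val by omega), zA_edgeFn h2,
      plucker, mul_add]
  have hd := ZMod.val_lt d
  -- if `p, q, r, s` are the lengths of the boundary arcs `ab, bc, cd, da`, the two differences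
  -- of lengths below are `2 * q * s` and `2 * p * r`
  obtain ⟨x, hx⟩ := Nat.exists_eq_add_of_lt h1
  obtain ⟨y, hy⟩ := Nat.exists_eq_add_of_lt h2
  obtain ⟨z, hz⟩ := Nat.exists_eq_add_of_lt h3
  obtain ⟨w, hw⟩ := Nat.exists_eq_add_of_lt hd
  have arith : ∀ x y z w A : ℕ, ∀ B C D M, B = A + x + 1 → C = B + y + 1 → D = C + z + 1 →
      M = D + w + 1 →
      (B - A) * (M - (B - A)) + (D - C) * (M - (D - C)) <
        (C - A) * (M - (C - A)) + (D - B) * (M - (D - B)) ∧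
      (D - A) * (M - (D - A)) + (C - B) * (M - (C - B)) <
        (C - A) * (M - (C - A)) + (D - B) * (M - (D - B)) := by
    intro x y z w A B C D M hB hC hD hM
    have e1 : B - A = x + 1 := by omega
    have e2 : D - C = z + 1 := by omega
    have e3 : C - A = x + y + 2 := by omega
    have e4 : D - B = y + z + 2 := by omega
    have e5 : D - A = x + y + z + 3 := by omega
    have e6 : C - B = y + 1 := by omega
    rw [e1, e2, e3, e4, e5, e6]
    have f1 : M - (x + 1) = A + y + z + w + 3 := by omega
    have f2 : M - (z + 1) = A + x + y + w + 3 := by omega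
    have f3 : M - (x + y + 2) = A + z + w + 2 := by omega
    have f4 : M - (y + z + 2) = A + x + w + 2 := by omega
    have f5 : M - (x + y + z + 3) = A + w + 1 := by omega
    have f6 : M - (y + 1) = A + x + z + w + 3 := by omega
    rw [f1, f2, f3, f4, f5, f6]
    constructor <;> nlinarith [Nat.zero_le (x*z), Nat.zero_le (y*w), Nat.zero_le (y*A)]
  obtain ⟨l1, l2⟩ := arith x y z w _ _ _ _ _ hx hy hz hw
  simp only [totalLength_add] at hL
  rw [totalLength_edgeFn (show a.val < c.val by omega),
    totalLength_edgeFn (show b.val < d.val by omega)] at hL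
  rw [e]
  refine Submodule.add_mem _ (ih _ ?_ _ ?_ rfl) (ih _ ?_ _ ?_ rfl)
  · simp only [totalLength_add]
    rw [totalLength_edgeFn h1, totalLength_edgeFn h3]
    omega
  · exact hg.add ((isMultigraph_edgeFn h1).add (isMultigraph_edgeFn h3))
  · simp only [totalLength_add]
    rw [totalLength_edgeFn (show a.val < d.val by omega), totalLength_edgeFn h2]
    omega
  · exact hg.add ((isMultigraph_edgeFn (by omega)).add (isMultigraph_edgeFn h2))

lemma Asub_le_ncSpan (m : ℕ) [NeZero m] : Subalgebra.toSubmodule (Asub m) ≤ ncSpan m := by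
  rw [Asub, Algebra.adjoin_eq_span, Submodule.span_le]
  intro p hp
  have : ∃ f, IsMultigraph f ∧ p = zA m f := by
    induction hp using Submonoid.closure_induction with
    | mem x hx =>
      obtain ⟨i, j, h, rfl⟩ := hx
      exact ⟨edgeFn i j, isMultigraph_edgeFn h, (zA_edgeFn h).symm⟩
    | one => exact ⟨0, ⟨fun _ _ => rfl, fun _ => rfl⟩, (zA_zero m).symm⟩
    | mul x y _ _ hx hy =>
      obtain ⟨f, hf, rfl⟩ := hx
      obtain ⟨g, hg, rfl⟩ := hy
      exact ⟨f + g, hf.add hg, (zA_add m f g).symm⟩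
  obtain ⟨f, hf, rfl⟩ := this
  exact zA_mem_ncSpan m _ f hf rfl

/-! ### Leading monomials: noncrossing monomials are independent -/

/-- The position of a variable: first column before second column, rows increasing. -/
def varPos (m : ℕ) (v : ZMod m × Fin 2) : ℕ := v.2.val * m + v.1.val

lemma varPos_injective (m : ℕ) [NeZero m] : Function.Injective (varPos m) := by
  rintro ⟨i, a⟩ ⟨j, b⟩ h
  have hi := ZMod.val_lt i
  have hj := ZMod.val_lt j
  have hab : a = b ∧ i.val = j.val := by
    fin_cases a <;> fin_cases b <;> simp [varPos] at h ⊢ <;> omega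
  exact Prod.ext (ZMod.val_injective m hab.2) hab.1

/-- The lexicographic monomial order for which `x_{11} > ⋯ > x_{m1} > x_{12} > ⋯ > x_{m2}`. -/
noncomputable def rowOrder (m : ℕ) [NeZero m] : MonomialOrder (ZMod m × Fin 2) :=
  letI : LinearOrder (ZMod m × Fin 2) := LinearOrder.lift' (varPos m) (varPos_injective m)
  MonomialOrder.lex

lemma rowOrder_lt (m : ℕ) [NeZero m] {c d : ZMod m × Fin 2 →₀ ℕ} (v : ZMod m × Fin 2)
    (h1 : ∀ u, varPos m u < varPos m v → c u = d u) (h2 : c v < d v) :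
    (rowOrder m).toSyn c < (rowOrder m).toSyn d := by
  let _ : LinearOrder (ZMod m × Fin 2) := LinearOrder.lift' (varPos m) (varPos_injective m)
  change toLex c < toLex d
  rw [Finsupp.Lex.lt_iff]
  exact ⟨v, fun u hu => h1 u hu, h2⟩

open MvPolynomial in
lemma degree_Dmin {m : ℕ} [NeZero m] {i j : ZMod m} (h : i.val < j.val) :
    (rowOrder m).degree (Dmin m i j) = Finsupp.single (i, 0) 1 + Finsupp.single (j, 1) 1 := by
  have hX : ∀ a b : ZMod m × Fin 2, (rowOrder m).degree
      (X a * X b : MvPolynomial (ZMod m × Fin 2) ℂ) =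
        Finsupp.single a 1 + Finsupp.single b 1 := by
    intro a b
    rw [MonomialOrder.degree_mul (X_ne_zero a) (X_ne_zero b), MonomialOrder.degree_X,
      MonomialOrder.degree_X]
  have hij : i ≠ j := by rintro rfl; omega
  rw [Dmin, MonomialOrder.degree_sub_of_lt, hX]
  rw [hX, hX]
  apply rowOrder_lt m (i, 0)
  · rintro ⟨u, c⟩ hu
    have hc : c = 0 := by
      have := ZMod.val_lt i
      fin_cases c
      · rfl
      · simp [varPos] at hu; omega
    subst hc
    have hu' : u.val < i.val := by simpa [varPos] using hu
    have n1 : i ≠ u := by rintro rfl; omega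
    have n2 : j ≠ u := by rintro rfl; omega
    simp [n1, n2]
  · simp [hij.symm]

lemma Dmin_ne_zero {m : ℕ} [NeZero m] {i j : ZMod m} (h : i.val < j.val) : Dmin m i j ≠ 0 := by
  apply (rowOrder m).ne_zero_of_degree_ne_zero
  rw [degree_Dmin h]
  intro h0
  have := DFunLike.congr_fun h0 (i, 0)
  simp at this

lemma zA_ne_zero (m : ℕ) [NeZero m] (f : ZMod m → ZMod m → ℕ) : zA m f ≠ 0 := by
  rw [zA_eq, Finset.prod_ne_zero_iff]
  intro p hp
  exact pow_ne_zero _ (Dmin_ne_zero (by simpa [edgePairs] using hp))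

lemma degree_zA (m : ℕ) [NeZero m] (f : ZMod m → ZMod m → ℕ) :
    (rowOrder m).degree (zA m f) = ∑ p ∈ edgePairs m,
      f p.1 p.2 • (Finsupp.single (p.1, (0 : Fin 2)) 1 + Finsupp.single (p.2, (1 : Fin 2)) 1) := by
  have hlt : ∀ p ∈ edgePairs m, p.1.val < p.2.val := fun p hp => by simpa [edgePairs] using hp
  rw [zA_eq, MonomialOrder.degree_prod]
  · refine Finset.sum_congr rfl fun p hp => ?_
    rw [MonomialOrder.degree_pow, degree_Dmin (hlt p hp)]
  · intro p hp
    exact pow_ne_zero _ (Dmin_ne_zero (hlt p hp))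

/-- The exponent of `x_{i1}` in the leading monomial counts the edges opening at `i`. -/
lemma degree_zA_left (m : ℕ) [NeZero m] (f : ZMod m → ZMod m → ℕ) (i : ZMod m) :
    (rowOrder m).degree (zA m f) (i, 0) = ∑ j, if i.val < j.val then f i j else 0 := by
  rw [degree_zA, Finsupp.finsetSum_apply, edgePairs, Finset.sum_filter,
    Fintype.sum_prod_type, Finset.sum_eq_single i]
  · simp
  · intro b _ hb
    simp [hb]
  · simp

/-- The exponent of `x_{j2}` in the leading monomial counts the edges closing at `j`. -/
lemma degree_zA_right (m : ℕ) [NeZero m] (f : ZMod m → ZMod m → ℕ) (j : ZMod m) :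
    (rowOrder m).degree (zA m f) (j, 1) = ∑ i, if i.val < j.val then f i j else 0 := by
  rw [degree_zA, Finsupp.finsetSum_apply, edgePairs, Finset.sum_filter,
    Fintype.sum_prod_type_right, Finset.sum_eq_single j]
  · simp
  · intro b _ hb
    simp [hb]
  · simp

lemma exists_lt_of_sum_eq {ι : Type*} [Fintype ι] {F G : ι → ℕ} (h : ∑ i, F i = ∑ i, G i)
    {j : ι} (hj : G j < F j) : ∃ i, F i < G i := by
  by_contra hc
  push Not at hc
  have := Finset.sum_lt_sum (fun i _ => hc i) ⟨j, Finset.mem_univ j, hj⟩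
  omega

/-- If `f` exceeds `g` on `{i,j}` while they agree on all shorter edges and have the same leading
monomial, then `g` has longer edges `{i,j'}` and `{i',j}`, and these cross. -/
lemma not_lt_of_degree_eq {m : ℕ} [NeZero m] {f g : ZMod m → ZMod m → ℕ} (hg : IsAMulti m g)
    (h : (rowOrder m).degree (zA m f) = (rowOrder m).degree (zA m g)) {i j : ZMod m}
    (hij : i.val < j.val)
    (hs : ∀ a b : ZMod m, a.val < b.val → b.val - a.val < j.val - i.val → f a b = g a b) :
    ¬ g i j < f i j := by
  intro hlt
  have hl := DFunLike.congr_fun h (i, 0)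
  rw [degree_zA_left, degree_zA_left] at hl
  have hr := DFunLike.congr_fun h (j, 1)
  rw [degree_zA_right, degree_zA_right] at hr
  obtain ⟨j', hj'⟩ := exists_lt_of_sum_eq hl (j := j) (by simpa [hij] using hlt)
  obtain ⟨i', hi'⟩ := exists_lt_of_sum_eq hr (j := i) (by simpa [hij] using hlt)
  split_ifs at hj' with hj1
  swap
  · omega
  split_ifs at hi' with hi1
  swap
  · omega
  have hjj : j.val < j'.val := by
    by_contra hc
    rcases Nat.lt_or_ge j'.val j.val with h' | h'
    · have := hs i j' hj1 (by omega)
      omega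
    · have : j = j' := ZMod.val_injective m (by omega)
      subst this
      omega
  have hii : i'.val < i.val := by
    by_contra hc
    rcases Nat.lt_or_ge i.val i'.val with h' | h'
    · have := hs i' j hi1 (by omega)
      omega
    · have : i = i' := ZMod.val_injective m (by omega)
      subst this
      omega
  have hx : crossE i' j i j' := by
    left
    rw [min_eq_left hi1.le, max_eq_right hi1.le, min_eq_left hj1.le, max_eq_right hj1.le]
    exact ⟨hii, hij, hjj⟩
  rcases hg.2.2 i' j i j' hx with h0 | h0 <;> omega

lemma eq_of_degree_eq {m : ℕ} [NeZero m] {f g : ZMod m → ZMod m → ℕ} (hf : IsAMulti m f)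
    (hg : IsAMulti m g) (h : (rowOrder m).degree (zA m f) = (rowOrder m).degree (zA m g)) :
    f = g := by
  have key : ∀ L, ∀ i j : ZMod m, i.val < j.val → j.val - i.val = L → f i j = g i j := by
    intro L
    induction L using Nat.strong_induction_on with
    | _ L ih =>
    intro i j hij hL
    have hs : ∀ a b : ZMod m, a.val < b.val → b.val - a.val < j.val - i.val → f a b = g a b :=
      fun a b hab hlt => ih _ (hL ▸ hlt) a b hab rfl
    have h1 := not_lt_of_degree_eq hg h hij hs
    have h2 := not_lt_of_degree_eq hf h.symm hij fun a b u v => (hs a b u v).symm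
    omega
  funext i j
  rcases lt_trichotomy i.val j.val with h' | h' | h'
  · exact key _ i j h' rfl
  · rw [ZMod.val_injective m h', hf.2.1, hg.2.1]
  · rw [hf.1, hg.1, key _ j i h' rfl]

lemma linearIndependent_of_degree_injective {σ ι : Type*} (o : MonomialOrder σ)
    (v : ι → MvPolynomial σ ℂ) (h0 : ∀ i, v i ≠ 0)
    (hinj : Function.Injective fun i => o.degree (v i)) : LinearIndependent ℂ v := by
  classical
  rw [linearIndependent_iff']
  intro s c hsum
  by_contra! hne
  obtain ⟨i, hi, hci⟩ := hne
  obtain ⟨t, ht, hmax⟩ := Finset.exists_max_image (s.filter fun i => c i ≠ 0)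
    (fun i => o.toSyn (o.degree (v i))) ⟨i, by simp [hi, hci]⟩
  rw [Finset.mem_filter] at ht
  have hco := congrArg (MvPolynomial.coeff (o.degree (v t))) hsum
  rw [MvPolynomial.coeff_sum, Finset.sum_eq_single t] at hco
  · rw [MvPolynomial.coeff_smul, MvPolynomial.coeff_zero, smul_eq_mul] at hco
    rcases mul_eq_zero.1 hco with h' | h'
    · exact ht.2 h'
    · exact h0 t (o.coeff_degree_eq_zero_iff.1 h')
  · intro b hb hbt
    rw [MvPolynomial.coeff_smul]
    by_cases hcb : c b = 0
    · rw [hcb, zero_smul]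
    · have hle := hmax b (by simp [hb, hcb])
      rw [o.coeff_eq_zero_of_lt, smul_zero]
      exact lt_of_le_of_ne hle fun he => hbt (hinj (o.toSyn.injective he))
  · exact fun hn => absurd ht.1 hn

/-! ### The basis of the Plücker algebra and the quotient -/

/-- The monomial of a noncrossing multigraph, as an element of the Plücker algebra. -/
noncomputable def zBasis (m : ℕ) (f : {f : ZMod m → ZMod m → ℕ // IsAMulti m f}) : Asub m :=
  ⟨zA m f.1, zA_mem m f.1⟩

lemma linearIndependent_zBasis (m : ℕ) [NeZero m] : LinearIndependent ℂ (zBasis m) := by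
  apply LinearIndependent.of_comp (Asub m).val.toLinearMap
  exact linearIndependent_of_degree_injective (rowOrder m) _ (fun f => zA_ne_zero m f.1)
    fun f g h => Subtype.ext (eq_of_degree_eq f.2 g.2 h)

lemma span_zBasis (m : ℕ) [NeZero m] : Submodule.span ℂ (Set.range (zBasis m)) = ⊤ := by
  have hinj : Function.Injective (Asub m).val.toLinearMap := Subtype.val_injective
  rw [eq_top_iff]
  intro x _
  have hx : (x : MvPolynomial (ZMod m × Fin 2) ℂ) ∈ ncSpan m := Asub_le_ncSpan m x.2
  have hmap : ncSpan m = (Submodule.span ℂ (Set.range (zBasis m))).map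
      (Asub m).val.toLinearMap := by
    rw [Submodule.map_span, ncSpan]
    congr 1
    ext p
    constructor
    · rintro ⟨f, hf, rfl⟩
      exact ⟨_, ⟨⟨f, hf⟩, rfl⟩, rfl⟩
    · rintro ⟨_, ⟨f, rfl⟩, rfl⟩
      exact ⟨f.1, f.2, rfl⟩
  rw [hmap] at hx
  obtain ⟨y, hy, hyx⟩ := hx
  rwa [← hinj hyx]

lemma val_n (n : ℕ) : ((n : ℕ) : ZMod (n+2)).val = n := ZMod.val_cast_of_lt (by omega)

lemma val_n1 (n : ℕ) : ((n+1 : ℕ) : ZMod (n+2)).val = n+1 := ZMod.val_cast_of_lt (by omega)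

/-- The edge `{n+1,n+2}` lies on the boundary, so adding it creates no crossing. -/
lemma isAMulti_add_boundary {n : ℕ} {f : ZMod (n+2) → ZMod (n+2) → ℕ} (hf : IsAMulti (n+2) f) :
    IsAMulti (n+2) (f + edgeFn ((n : ℕ) : ZMod (n+2)) ((n+1 : ℕ) : ZMod (n+2))) := by
  have hM := IsMultigraph.add (f := f) ⟨hf.1, hf.2.1⟩ (isMultigraph_edgeFn (deltaD_val n))
  have key : ∀ i j a b : ZMod (n+2), crossE i j a b →
      edgeFn ((n : ℕ) : ZMod (n+2)) ((n+1 : ℕ) : ZMod (n+2)) i j = 0 := by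
    intro i j a b hx
    have ha := ZMod.val_lt a
    have hb := ZMod.val_lt b
    unfold edgeFn
    rw [if_neg]
    unfold crossE at hx
    rintro (⟨rfl, rfl⟩ | ⟨rfl, rfl⟩) <;> rw [val_n, val_n1] at hx <;> omega
  refine ⟨hM.1, hM.2, fun i j a b hx => ?_⟩
  have hx' : crossE a b i j := Or.symm hx
  simp only [Pi.add_apply, key i j a b hx, key a b i j hx', add_zero]
  exact hf.2.2 i j a b hx

/-- The noncrossing multigraphs containing the edge `{n+1,n+2}`. -/
def withBoundary (n : ℕ) : Set {f : ZMod (n+2) → ZMod (n+2) → ℕ // IsAMulti (n+2) f} :=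
  {f | f.1 ((n : ℕ) : ZMod (n+2)) ((n+1 : ℕ) : ZMod (n+2)) ≠ 0}

/-- Multiplication by `Δ_{n+1,n+2}` sends each basis monomial to one divisible by it, so the
ideal is contained in the span of the latter. -/
lemma JD_le_span (n : ℕ) {x : Asub (n+2)} (hx : x ∈ JD n) :
    x ∈ Submodule.span ℂ (zBasis (n+2) '' withBoundary n) := by
  obtain ⟨y, rfl⟩ := Ideal.mem_span_singleton.1 hx
  have hy : y ∈ Submodule.span ℂ (Set.range (zBasis (n+2))) := by
    rw [span_zBasis]; trivial
  induction hy using Submodule.span_induction with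
  | mem y hy =>
    obtain ⟨f, rfl⟩ := hy
    refine Submodule.subset_span ⟨⟨_, isAMulti_add_boundary f.2⟩, ?_, ?_⟩
    · simp [withBoundary, edgeFn_self]
    · apply Subtype.ext
      change zA (n+2) _ = Dmin (n+2) _ _ * zA (n+2) f.1
      rw [zA_add, zA_edgeFn (deltaD_val n), mul_comm]
  | zero => rw [mul_zero]; exact Submodule.zero_mem _
  | add y z _ _ hy hz =>
    rw [mul_add]
    exact Submodule.add_mem _ (hy (Ideal.mem_span_singleton.2 ⟨y, rfl⟩))
      (hz (Ideal.mem_span_singleton.2 ⟨z, rfl⟩))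
  | smul c y _ hy =>
    rw [mul_smul_comm]
    exact Submodule.smul_mem _ c (hy (Ideal.mem_span_singleton.2 ⟨y, rfl⟩))

lemma zA_mem_JD {n : ℕ} {f : ZMod (n+2) → ZMod (n+2) → ℕ}
    (hf : f ((n : ℕ) : ZMod (n+2)) ((n+1 : ℕ) : ZMod (n+2)) ≠ 0) :
    (⟨zA (n+2) f, zA_mem (n+2) f⟩ : Asub (n+2)) ∈ JD n := by
  classical
  -- `f` need not be symmetric: truncation at the reversed pair is harmless, as only increasing
  -- pairs enter `zA`
  let g : ZMod (n+2) → ZMod (n+2) → ℕ :=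
    f - edgeFn ((n : ℕ) : ZMod (n+2)) ((n+1 : ℕ) : ZMod (n+2))
  have hz : zA (n+2) f = Dmin (n+2) ((n : ℕ) : ZMod (n+2)) ((n+1 : ℕ) : ZMod (n+2)) *
      zA (n+2) g := by
    rw [← zA_edgeFn (deltaD_val n), ← zA_add, zA_eq, zA_eq]
    refine Finset.prod_congr rfl fun p hp => ?_
    congr 1
    change f p.1 p.2 = edgeFn _ _ p.1 p.2 + (f p.1 p.2 - edgeFn _ _ p.1 p.2)
    by_cases hpe : p = (((n : ℕ) : ZMod (n+2)), ((n+1 : ℕ) : ZMod (n+2)))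
    · subst hpe
      rw [edgeFn_self]
      dsimp only
      omega
    · rw [edgeFn_eq_zero (deltaD_val n) (by simpa [edgePairs] using hp) hpe]
      omega
  exact Ideal.mem_span_singleton.2 ⟨⟨zA (n+2) g, zA_mem (n+2) g⟩, Subtype.ext hz⟩

/-! ### The grading -/

lemma dEndCount_eq (n : ℕ) (f : ZMod (n+2) → ZMod (n+2) → ℕ) :
    dEndCount n f = ∑ p ∈ edgePairs (n+2),
      f p.1 p.2 • (wD n (p.1, 0) + wD n (p.2, 0)) := by
  have conv : ∀ F : ℕ → ℕ, ∑ i ∈ range (n+2), F i = ∑ i : ZMod (n+2), F i.val := fun F =>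
    prod_range_eq_prod_zmod (M := Multiplicative ℕ) (n+2) F
  rw [dEndCount, conv, edgePairs, Finset.sum_filter, Fintype.sum_prod_type]
  refine Finset.sum_congr rfl fun i _ => ?_
  rw [conv]
  simp only [ZMod.natCast_zmod_val, wD, smul_eq_mul]

open MvPolynomial in
lemma zA_homogeneous (n : ℕ) (f : ZMod (n+2) → ZMod (n+2) → ℕ) :
    IsWeightedHomogeneous (wD n) (zA (n+2) f) (dEndCount n f) := by
  rw [zA_eq, dEndCount_eq]
  refine IsWeightedHomogeneous.prod _ _ _ fun p _ => IsWeightedHomogeneous.pow ?_ _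
  have hX := isWeightedHomogeneous_X ℂ (wD n)
  have h1 := (hX (p.1, 0)).mul (hX (p.2, 1))
  have h2 := (hX (p.2, 0)).mul (hX (p.1, 1))
  rw [add_comm (wD n (p.2, 0))] at h2
  exact (weightedHomogeneousSubmodule ℂ (wD n) _).sub_mem h1 h2

/-- A homogeneous element of the Plücker algebra is a combination of basis monomials of the same
degree: project an arbitrary expansion to that degree. -/
lemma mem_span_of_homogeneous (n k : ℕ) {x : Asub (n+2)}
    (hx : MvPolynomial.IsWeightedHomogeneous (wD n) (x : MvPolynomial (ZMod (n+2) × Fin 2) ℂ) k) :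
    x ∈ Submodule.span ℂ (zBasis (n+2) '' {f | dEndCount n f.1 = k}) := by
  have hinj : Function.Injective (Asub (n+2)).val.toLinearMap := Subtype.val_injective
  have key : ∀ y ∈ Submodule.span ℂ (Set.range (zBasis (n+2))),
      MvPolynomial.weightedHomogeneousComponent (wD n) k
        (y : MvPolynomial (ZMod (n+2) × Fin 2) ℂ) ∈
      (Submodule.span ℂ (zBasis (n+2) '' {f | dEndCount n f.1 = k})).map
        (Asub (n+2)).val.toLinearMap := by
    intro y hy
    induction hy using Submodule.span_induction with
    | mem y hy =>
      obtain ⟨f, rfl⟩ := hy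
      change MvPolynomial.weightedHomogeneousComponent (wD n) k (zA (n+2) f.1) ∈ _
      rw [MvPolynomial.weightedHomogeneousComponent_of_mem (n := dEndCount n f.1)
        (zA_homogeneous n f.1)]
      split_ifs with h
      · exact ⟨zBasis (n+2) f, Submodule.subset_span ⟨f, h.symm, rfl⟩, rfl⟩
      · exact Submodule.zero_mem _
    | zero => simp
    | add y z _ _ hy hz =>
      rw [Subalgebra.coe_add, map_add]
      exact Submodule.add_mem _ hy hz
    | smul c y _ hy =>
      rw [Subalgebra.coe_smul, map_smul]
      exact Submodule.smul_mem _ c hy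
  have hk := key x (by rw [span_zBasis]; trivial)
  rw [hx.weightedHomogeneousComponent_same] at hk
  obtain ⟨y, hy, hyx⟩ := hk
  rwa [← hinj hyx]

/-- Lemma 4.1.  Let `n ≥ 2` and `k ≥ 0`.  Identifying polynomials in
`𝒜_{n+2}` with their images in `V^D(n) = 𝒜_{n+2}/(Δ_{n+1,n+2})`, the images of the
cluster monomials `z_f^A`, as `f` ranges over all A-multidissections of `P_{n+2}` with
`f({n+1,n+2}) = 0` and with exactly `k` endpoints (counted with multiplicity) in
`{1,…,n}`, form a `ℂ`-basis of the D-degree-`k` component `V^D(n,k)`. -/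
theorem statement11 (n k : ℕ) (hn : 2 ≤ n) :
    LinearIndependent ℂ
      (fun f : {f : ZMod (n+2) → ZMod (n+2) → ℕ //
          IsAMulti (n+2) f ∧
          f ((n : ℕ) : ZMod (n+2)) (((n+1 : ℕ)) : ZMod (n+2)) = 0 ∧
          dEndCount n f = k} =>
        Ideal.Quotient.mkₐ ℂ (JD n) ⟨zA (n+2) f.1, zA_mem (n+2) f.1⟩) ∧
    Submodule.span ℂ
        (Set.range (fun f : {f : ZMod (n+2) → ZMod (n+2) → ℕ //
          IsAMulti (n+2) f ∧
          f ((n : ℕ) : ZMod (n+2)) (((n+1 : ℕ)) : ZMod (n+2)) = 0 ∧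
          dEndCount n f = k} =>
        Ideal.Quotient.mkₐ ℂ (JD n) ⟨zA (n+2) f.1, zA_mem (n+2) f.1⟩)) =
      VDk n k := by
  constructor
  · let ι : {f : ZMod (n+2) → ZMod (n+2) → ℕ // IsAMulti (n+2) f ∧
          f ((n : ℕ) : ZMod (n+2)) (((n+1 : ℕ)) : ZMod (n+2)) = 0 ∧ dEndCount n f = k} →
        {f : ZMod (n+2) → ZMod (n+2) → ℕ // IsAMulti (n+2) f} := fun f => ⟨f.1, f.2.1⟩
    have hι : Function.Injective ι := by
      intro f g h
      have h' : (ι f).1 = (ι g).1 := by rw [h]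
      exact Subtype.ext h'
    have hli := (linearIndependent_zBasis (n+2)).comp ι hι
    refine hli.map (f := (Ideal.Quotient.mkₐ ℂ (JD n)).toLinearMap) ?_
    have hdisj : Disjoint (Set.range ι) (withBoundary n) := by
      rw [Set.disjoint_left]
      rintro _ ⟨f, rfl⟩ hf
      exact hf f.2.2.1
    refine ((linearIndependent_zBasis (n+2)).disjoint_span_image hdisj).mono ?_ ?_
    · rw [Set.range_comp]
    · intro x hx
      exact JD_le_span n (Ideal.Quotient.eq_zero_iff_mem.1 hx)
  · apply le_antisymm
    · rw [Submodule.span_le]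
      rintro _ ⟨f, rfl⟩
      refine ⟨⟨zA (n+2) f.1, zA_mem (n+2) f.1⟩, ?_, rfl⟩
      have := zA_homogeneous n f.1
      rw [f.2.2.2] at this
      exact this
    · rintro _ ⟨x, hx, rfl⟩
      have hmem := Submodule.mem_map_of_mem (f := (Ideal.Quotient.mkₐ ℂ (JD n)).toLinearMap)
        (mem_span_of_homogeneous n k hx)
      rw [Submodule.map_span] at hmem
      refine Submodule.span_le.2 ?_ hmem
      rintro _ ⟨_, ⟨f, hf, rfl⟩, rfl⟩
      by_cases h0 : f.1 ((n : ℕ) : ZMod (n+2)) ((n+1 : ℕ) : ZMod (n+2)) = 0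
      · exact Submodule.subset_span ⟨⟨f.1, f.2, h0, hf⟩, rfl⟩
      · have hz : (Ideal.Quotient.mkₐ ℂ (JD n)).toLinearMap (zBasis (n+2) f) = 0 :=
          Ideal.Quotient.eq_zero_iff_mem.2 (zA_mem_JD h0)
        rw [hz]
        exact Submodule.zero_mem _
end

section
/- Let n ≥ 2 and k ≥ 0. In the polynomial ring ℂ[y_1,…,y_n,z_1,z_2], the sum over all A-multidissections f of P_{n+2} with f({n+1,n+2}) = 0 and with exactly k endpoints (counted with multiplicity) in {1,…,n} of the monomials Π_{e={i,j}∈E_A} (w_i w_j)^{f(e)} — where w_i = y_i for 1 ≤ i ≤ n, w_{n+1} = z_1, w_{n+2} = z_2 — is equal to Σ_{ℓ=0}^{⌊k/2⌋} s_{(k−ℓ,ℓ)}(y_1,…,y_n)·h_{k−2ℓ}(z_1,z_2). -/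
/-!
The proof is a weight-preserving bijection. Cut the polygon open to a line, so that every edge has
a left end and a right end. A noncrossing multigraph is then a system of matched parentheses: each
vertex `v` carries `b v` closing and then `a v` opening parentheses (its right and left degrees), and
the matching is recovered from the pair `(a, b)`. The pairs that occur are those satisfying the
ballot condition `b 0 + ⋯ + b v ≤ a 0 + ⋯ + a (v - 1)` with equal totals, and the weight of the
multigraph is the product of the `w_v ^ (a v + b v)`.

To make the matching explicit, let `cut i j` be the number of edges with left end `< i` and right
end `≥ j`. Noncrossing means exactly that
`cut i (j + 1) = min (cut i j) (cut j (j + 1))` for `i ≤ j` (`cut_succ`), while `cut i i` and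
`cut j (j + 1)` are differences of partial sums of `a` and `b`. Hence the degrees determine the
multigraph (`IsNC.ext_of_rowS_colS`); conversely, solving this recursion for given ballot data and
taking mixed differences yields a noncrossing multigraph with those degrees (`exists_isNC`).

If the last two of the `n + 2` vertices are not joined, they have no left ends. Let `l` be the
number of right ends among the first `n` vertices. Since `k` endpoints lie there, `k - l` of them
are left ends, and the ballot condition on the first `n` vertices says that `a` and `b` are the
contents of the rows of a semistandard tableau of shape `(k - l, l)` (`isSSYT2_iff`, `schur2_eq`).
The remaining `k - 2 * l` right ends are distributed freely over the last two vertices, which gives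
the monomials of `h_{k - 2l}(z_1, z_2)` (`hh_eq`).
-/


open Finset

/-! ### Noncrossing multigraphs and their degrees -/

/-- A multigraph on the vertices `0, …, m-1` without crossings, drawn with its vertices on a line:
`F i j` is the multiplicity of the edge from its left end `i` to its right end `j`, and `F i j = 0`
unless `i < j < m`. -/
structure IsNC (m : ℕ) (F : ℕ → ℕ → ℕ) : Prop where
  supp : ∀ i j, F i j ≠ 0 → i < j ∧ j < m
  nc : ∀ i k j l, i < k → k < j → j < l → F i j = 0 ∨ F k l = 0

/-- The number of edges having `v` as left end. -/
def rowS (m : ℕ) (F : ℕ → ℕ → ℕ) (v : ℕ) : ℕ := ∑ j ∈ range m, F v j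

/-- The number of edges having `v` as right end. -/
def colS (m : ℕ) (F : ℕ → ℕ → ℕ) (v : ℕ) : ℕ := ∑ i ∈ range m, F i v

/-- The number of edges with left end `< i` and right end `≥ j`. -/
def cut (m : ℕ) (F : ℕ → ℕ → ℕ) (i j : ℕ) : ℕ := ∑ u ∈ range i, ∑ w ∈ Ico j m, F u w

/-- Among the edges with left end `< i`, those not counted by `cut m F i j` have right end `< j`;
for `j ≤ i + 1` these are all the edges with right end `< j`. -/
lemma sum_rowS_eq {m : ℕ} {F : ℕ → ℕ → ℕ} (hF : IsNC m F) {i j : ℕ} (h1 : j ≤ i + 1)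
    (hi : i ≤ m) (h2 : j ≤ m) :
    ∑ u ∈ range i, rowS m F u = cut m F i j + ∑ u ∈ range j, colS m F u := by
  have hB : ∑ u ∈ range j, colS m F u = ∑ u ∈ range i, ∑ w ∈ range j, F u w := by
    rw [Finset.sum_comm]
    refine Finset.sum_congr rfl fun w hw => ?_
    rw [colS]
    symm
    refine Finset.sum_subset (fun x => by simp; omega) fun u _ hu => ?_
    by_contra h
    have := hF.supp _ _ h
    simp at hw hu
    omega
  rw [hB, cut, ← Finset.sum_add_distrib]
  refine Finset.sum_congr rfl fun u _ => ?_
  rw [rowS, add_comm, Finset.sum_range_add_sum_Ico _ h2]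

/-- The only place where planarity enters: if some edge from the left of `i` ended at `j` while
some edge from `[i, j)` passed over `j`, those two would cross. -/
lemma cut_succ {m : ℕ} {F : ℕ → ℕ → ℕ} (hF : IsNC m F) {i j : ℕ} (h1 : i ≤ j) (h2 : j < m) :
    cut m F i (j + 1) = min (cut m F i j) (cut m F j (j + 1)) := by
  have e1 : cut m F i j = ∑ u ∈ range i, F u j + cut m F i (j + 1) := by
    rw [cut, cut, ← Finset.sum_add_distrib]
    refine Finset.sum_congr rfl fun u _ => ?_
    rw [Finset.sum_eq_sum_Ico_succ_bot h2]
  have e2 : cut m F j (j + 1) = cut m F i (j + 1) + ∑ u ∈ Ico i j, ∑ w ∈ Ico (j + 1) m, F u w := by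
    rw [cut, cut, Finset.sum_range_add_sum_Ico _ h1]
  have e3 : ∑ u ∈ range i, F u j = 0 ∨ ∑ u ∈ Ico i j, ∑ w ∈ Ico (j + 1) m, F u w = 0 := by
    by_contra! h
    obtain ⟨u, hu, hu'⟩ := Finset.exists_ne_zero_of_sum_ne_zero h.1
    obtain ⟨v, hv, hv'⟩ := Finset.exists_ne_zero_of_sum_ne_zero h.2
    obtain ⟨w, hw, hw'⟩ := Finset.exists_ne_zero_of_sum_ne_zero hv'
    simp at hu hv hw
    rcases hF.nc u v j w (by omega) (by omega) (by omega) with h | h <;> contradiction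
  omega

/-- A noncrossing multigraph is determined by its left and right degrees, since these determine all
its cut numbers. -/
lemma IsNC.ext_of_rowS_colS {m : ℕ} {F G : ℕ → ℕ → ℕ} (hF : IsNC m F) (hG : IsNC m G)
    (hr : ∀ v < m, rowS m F v = rowS m G v) (hc : ∀ v < m, colS m F v = colS m G v) : F = G := by
  have hr' : ∀ i ≤ m, ∑ u ∈ range i, rowS m F u = ∑ u ∈ range i, rowS m G u := fun i hi =>
    Finset.sum_congr rfl fun u hu => hr u (by simp at hu; omega)
  have hc' : ∀ i ≤ m, ∑ u ∈ range i, colS m F u = ∑ u ∈ range i, colS m G u := fun i hi =>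
    Finset.sum_congr rfl fun u hu => hc u (by simp at hu; omega)
  -- near the diagonal the cut numbers are read off from the degrees
  have hd : ∀ i j, j ≤ i + 1 → i ≤ m → j ≤ m → cut m F i j = cut m G i j := by
    intro i j h1 h2 h3
    have a1 := sum_rowS_eq hF h1 h2 h3
    have a2 := sum_rowS_eq hG h1 h2 h3
    have := hr' i h2
    have := hc' j h3
    omega
  have hcut : ∀ i j, i ≤ j → j ≤ m → cut m F i j = cut m G i j := by
    intro i j hij
    induction j, hij using Nat.le_induction with
    | base => intro h; exact hd i i (by omega) h h
    | succ j hij ih =>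
      intro h
      rw [cut_succ hF hij (by omega), cut_succ hG hij (by omega), ih (by omega),
        hd j (j + 1) le_rfl (by omega) h]
  have htail : ∀ i j, i < j → j ≤ m → ∑ w ∈ Ico j m, F i w = ∑ w ∈ Ico j m, G i w := by
    intro i j hij hj
    have a1 := hcut (i + 1) j hij hj
    have a2 := hcut i j hij.le hj
    simp only [cut, Finset.sum_range_succ] at a1 a2
    omega
  funext i j
  by_cases h : i < j ∧ j < m
  · have a1 := htail i j h.1 h.2.le
    have a2 := htail i (j + 1) (by omega) h.2
    rw [Finset.sum_eq_sum_Ico_succ_bot h.2, Finset.sum_eq_sum_Ico_succ_bot h.2] at a1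
    omega
  · have a1 : F i j = 0 := by by_contra h'; exact h (hF.supp _ _ h')
    have a2 : G i j = 0 := by by_contra h'; exact h (hG.supp _ _ h')
    rw [a1, a2]

/-- The recursion solved by the cut numbers: `h i` is the value on the diagonal, `h' j` is the
number of edges passing strictly over `j`. Only the values with `i ≤ j` are meaningful. -/
def cutRec (h h' : ℕ → ℕ) (i : ℕ) : ℕ → ℕ
  | 0 => h i
  | j + 1 => if i ≤ j then min (cutRec h h' i j) (h' j) else h i

lemma cutRec_of_le (h h' : ℕ → ℕ) (i j : ℕ) (hj : j ≤ i) : cutRec h h' i j = h i := by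
  cases j with
  | zero => rfl
  | succ j => rw [cutRec, if_neg (by omega)]

lemma cutRec_succ (h h' : ℕ → ℕ) (i j : ℕ) (hj : i ≤ j) :
    cutRec h h' i (j + 1) = min (cutRec h h' i j) (h' j) := by
  rw [cutRec, if_pos hj]

/-- Degrees satisfying the ballot condition are realised: the multiplicities are the mixed second
differences of the cut numbers computed by `cutRec`. -/
lemma exists_isNC {m : ℕ} (a b : ℕ → ℕ) (hm : 0 < m)
    (hbal : ∀ v < m, ∑ u ∈ range (v + 1), b u ≤ ∑ u ∈ range v, a u)
    (htot : ∑ u ∈ range m, a u = ∑ u ∈ range m, b u) :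
    ∃ F, IsNC m F ∧ (∀ v < m, rowS m F v = a v) ∧ ∀ v < m, colS m F v = b v := by
  set A : ℕ → ℕ := fun i => ∑ u ∈ range i, a u with hA
  set B : ℕ → ℕ := fun i => ∑ u ∈ range i, b u with hB
  have hAs : ∀ i, A (i + 1) = A i + a i := fun i => Finset.sum_range_succ _ _
  have hBs : ∀ i, B (i + 1) = B i + b i := fun i => Finset.sum_range_succ _ _
  have hA0 : A 0 = 0 := rfl
  have hB0 : B 0 = 0 := rfl
  replace hbal : ∀ v < m, B (v + 1) ≤ A v := hbal
  replace htot : A m = B m := htot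
  set C : ℕ → ℕ → ℕ := cutRec (fun i => A i - B i) (fun j => A j - B (j + 1)) with hC
  have Cd : ∀ i, C i i = A i - B i := fun i => cutRec_of_le _ _ _ _ le_rfl
  have Cs : ∀ i j, i ≤ j → C i (j + 1) = min (C i j) (A j - B (j + 1)) :=
    fun i j h => cutRec_succ _ _ _ _ h
  have C0 : ∀ j, C 0 j = 0 := by
    intro j
    induction j with
    | zero => rw [Cd, hA0, zero_tsub]
    | succ j ih => rw [Cs _ _ (by omega), ih]; omega
  have Cmono : ∀ i j, i < j → C i j ≤ C (i + 1) j := by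
    intro i j hij
    induction j, hij using Nat.le_induction with
    | base =>
      rw [Cs i i le_rfl, Cd (i + 1), hAs]
      omega
    | succ j hij ih =>
      rw [Cs _ _ (by omega), Cs _ _ (by omega)]
      omega
  have Cm : ∀ i ≤ m, C i m = 0 := by
    obtain ⟨t, rfl⟩ : ∃ t, m = t + 1 := ⟨m - 1, by omega⟩
    intro i hi
    have h1 := hbal t (by omega)
    have h2 := hAs t
    rcases Nat.lt_or_ge i (t + 1) with h | h
    · rw [Cs _ _ (by omega)]; omega
    · obtain rfl : i = t + 1 := by omega
      rw [Cd]; omega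
  -- `M i j` is the number of edges with left end `i` and right end at least `j`
  set M : ℕ → ℕ → ℕ := fun i j => C (i + 1) j - C i j with hM
  have Ms : ∀ i j, i < j → M i (j + 1) ≤ M i j := by
    intro i j hij
    have := Cmono i j hij
    simp only [hM, Cs (i + 1) j hij, Cs i j hij.le]
    omega
  have Manti : ∀ i j l, i < j → j ≤ l → M i l ≤ M i j := by
    intro i j l hij hjl
    induction l, hjl using Nat.le_induction with
    | base => exact le_rfl
    | succ l hl ih => exact (Ms i l (by omega)).trans ih
  have Cmono' : ∀ i i' j, i ≤ i' → i' ≤ j → C i j ≤ C i' j := by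
    intro i i' j hi
    induction i', hi using Nat.le_induction with
    | base => intro _; exact le_rfl
    | succ l hl ih => intro h; exact (ih (by omega)).trans (Cmono l j (by omega))
  set F : ℕ → ℕ → ℕ := fun i j => if i < j ∧ j < m then M i j - M i (j + 1) else 0 with hFdef
  have Fpos : ∀ i j, i < j → j < m → F i j = M i j - M i (j + 1) := fun i j h1 h2 =>
    if_pos ⟨h1, h2⟩
  have Fsupp : ∀ i j, F i j ≠ 0 → i < j ∧ j < m := by
    intro i j h
    by_contra h'
    exact h (if_neg h')
  refine ⟨F, ⟨Fsupp, ?_⟩, ?_, ?_⟩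
  · intro i k j l hik hkj hjl
    by_contra! h
    obtain ⟨hij, hkl⟩ := h
    have hl := (Fsupp _ _ hkl).2
    rw [Fpos _ _ (by omega) (by omega)] at hij hkl
    -- an edge from `k` survives past `j`, so the edges from `i < k`, lower in the stack, all do
    have h1 : 0 < M k (j + 1) := by
      have := Manti k (j + 1) l (by omega) (by omega)
      omega
    have h2 : C k j < A j - B (j + 1) := by
      simp only [hM, Cs (k + 1) j hkj, Cs k j hkj.le] at h1
      omega
    have h3 := Cmono' i k j hik.le hkj.le
    have h4 := Cmono' (i + 1) k j hik hkj.le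
    simp only [hM, Cs (i + 1) j (by omega), Cs i j (by omega)] at hij
    omega
  · intro v hv
    have key : ∀ t, v < t → t ≤ m → ∑ j ∈ range t, F v j + M v t = M v (v + 1) := by
      intro t ht
      induction t, ht using Nat.le_induction with
      | base =>
        intro _
        rw [Finset.sum_eq_zero, zero_add]
        intro j hj
        by_contra h
        have := Fsupp _ _ h
        simp at hj
        omega
      | succ t ht ih =>
        intro h
        rw [Finset.sum_range_succ, Fpos _ _ ht h, ← ih (by omega)]
        have := Ms v t ht
        omega
    have h1 := key m hv le_rfl
    have h2 : M v m = 0 := by simp only [hM, Cm (v + 1) hv]; omega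
    have h3 : M v (v + 1) = a v := by
      simp only [hM, Cd, Cs v v le_rfl]
      have := hAs v
      have := hBs v
      have := hbal v hv
      omega
    rw [rowS]
    omega
  · intro v hv
    have key : ∀ t ≤ v, ∑ i ∈ range t, F i v + C t (v + 1) = C t v := by
      intro t
      induction t with
      | zero => simp [C0]
      | succ t ih =>
        intro h
        have e := ih (by omega)
        have e1 := Ms t v h
        have e2 := Cmono t v h
        have e3 := Cmono t (v + 1) (by omega)
        rw [Finset.sum_range_succ, Fpos _ _ h hv]
        simp only [hM] at *
        omega
    have h1 := key v le_rfl
    have h2 : colS m F v = ∑ i ∈ range v, F i v := by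
      symm
      refine Finset.sum_subset (fun x => by simp; omega) fun u _ hu => ?_
      by_contra h
      have := Fsupp _ _ h
      simp at hu
      omega
    rw [Cs _ _ le_rfl, Cd] at h1
    have := hBs v
    have := hbal v hv
    omega

/-! ### Tableaux and their contents -/

/-- The content of a sequence: `cnt T v` is the number of entries equal to `v`. -/
def cnt {n k : ℕ} (T : Fin k → Fin n) (v : ℕ) : ℕ := #{p | (T p : ℕ) = v}

lemma cnt_mem {n k : ℕ} (T : Fin k → Fin n) : cnt T ∈ piAntidiag (range n) k := by
  rw [mem_piAntidiag]
  constructor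
  · have := Finset.card_eq_sum_card_fiberwise (s := (univ : Finset (Fin k))) (t := range n)
      (f := fun p => (T p : ℕ)) (fun p _ => by simp)
    simp only [card_univ, Fintype.card_fin] at this
    exact this.symm
  · intro v hv
    obtain ⟨p, hp⟩ := Finset.card_ne_zero.mp hv
    simp at hp
    simp [← hp]

lemma prod_eq_cnt {R : Type*} [CommSemiring R] {n k : ℕ} (T : Fin k → Fin n) (y : ℕ → R) :
    ∏ p, y (T p) = ∏ v ∈ range n, y v ^ cnt T v := by
  rw [← Finset.prod_fiberwise_of_maps_to (s := univ) (t := range n) (g := fun p => (T p : ℕ))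
    (fun p _ => by simp)]
  refine Finset.prod_congr rfl fun v _ => ?_
  rw [Finset.prod_congr rfl (g := fun _ => y v), Finset.prod_const, cnt]
  intro p hp
  simp at hp
  rw [hp]

/-- In a weakly increasing sequence the entries less than `v` form an initial segment. -/
lemma lt_iff_cnt {n k : ℕ} {T : Fin k → Fin n} (hT : ∀ i j, i ≤ j → T i ≤ T j) (p : Fin k)
    (v : ℕ) :
    (T p : ℕ) < v ↔ (p : ℕ) < ∑ u ∈ range v, cnt T u := by
  have e : ∑ u ∈ range v, cnt T u = #{q | (T q : ℕ) < v} := by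
    rw [Finset.card_eq_sum_card_fiberwise (t := range v) (f := fun p => (T p : ℕ))
      (fun p hp => by simpa using hp)]
    refine Finset.sum_congr rfl fun u hu => ?_
    rw [cnt, Finset.filter_filter]
    congr 1
    ext q
    simp at hu ⊢
    omega
  rw [e]
  constructor
  · intro h
    have : Finset.Iic p ⊆ ({q | (T q : ℕ) < v} : Finset (Fin k)) := by
      intro q hq
      simp at hq ⊢
      have : (T q : ℕ) ≤ T p := hT q p hq
      omega
    have := Finset.card_le_card this
    simp at this
    omega
  · intro h
    by_contra h'
    have : ({q | (T q : ℕ) < v} : Finset (Fin k)) ⊆ Finset.Iio p := by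
      intro q hq
      simp at hq ⊢
      by_contra hpq
      have : (T p : ℕ) ≤ T q := hT p q (by omega)
      omega
    have := Finset.card_le_card this
    simp at this
    omega

/-- A weakly increasing sequence is determined by its content. -/
lemma cnt_inj {n k : ℕ} {T T' : Fin k → Fin n} (hT : ∀ i j, i ≤ j → T i ≤ T j)
    (hT' : ∀ i j, i ≤ j → T' i ≤ T' j) (h : cnt T = cnt T') : T = T' := by
  funext p
  have h1 : ∀ v, (T p : ℕ) < v ↔ (T' p : ℕ) < v := fun v => by
    rw [lt_iff_cnt hT, lt_iff_cnt hT', h]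
  have h2 := h1 (T p)
  have h3 := h1 (T' p)
  apply Fin.ext
  omega

/-- Every content is that of a weakly increasing sequence. -/
lemma cnt_surj {n k : ℕ} {α : ℕ → ℕ} (hα : α ∈ piAntidiag (range n) k) :
    ∃ T : Fin k → Fin n, (∀ i j, i ≤ j → T i ≤ T j) ∧ cnt T = α := by
  rw [mem_piAntidiag] at hα
  obtain ⟨hs, hsupp⟩ := hα
  have mono : Monotone fun v => ∑ u ∈ range v, α u := fun x y h =>
    Finset.sum_le_sum_of_subset (Finset.range_subset_range.mpr h)
  -- the `p`-th entry is the `v` for which `p` lies between consecutive partial sums of `α`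
  have ex : ∀ p : Fin k, ∃ v : Fin n,
      ∑ u ∈ range v, α u ≤ p ∧ (p : ℕ) < ∑ u ∈ range (v + 1), α u := by
    intro p
    have h : ∃ v, (p : ℕ) < ∑ u ∈ range (v + 1), α u := by
      refine ⟨n, ?_⟩
      have := mono (show n ≤ n + 1 by omega)
      simp only [hs] at this
      omega
    classical
    have h1 := Nat.find_spec h
    have h2 : ∑ u ∈ range (Nat.find h), α u ≤ p := by
      rcases Nat.eq_zero_or_pos (Nat.find h) with h0 | h0
      · simp [h0]
      · have := Nat.find_min h (m := Nat.find h - 1) (by omega)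
        rw [Nat.sub_add_cancel h0] at this
        omega
    refine ⟨⟨Nat.find h, ?_⟩, h2, h1⟩
    by_contra h3
    have := mono (show n ≤ Nat.find h by omega)
    simp only [hs] at this
    omega
  choose T hT1 hT2 using ex
  refine ⟨T, ?_, ?_⟩
  · intro i j hij
    by_contra h
    have h' : (T j : ℕ) + 1 ≤ T i := by omega
    have := mono h'
    have := hT1 i
    have := hT2 j
    simp only at *
    omega
  · funext v
    by_cases hv : v < n
    · have e : (({p | (T p : ℕ) = v} : Finset (Fin k)).map Fin.valEmbedding) =
          Ico (∑ u ∈ range v, α u) (∑ u ∈ range (v + 1), α u) := by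
        ext q
        simp only [mem_map, mem_filter, mem_univ, true_and, Fin.valEmbedding_apply, mem_Ico]
        constructor
        · rintro ⟨p, rfl, rfl⟩
          exact ⟨hT1 p, hT2 p⟩
        · rintro ⟨h1, h2⟩
          have h3 := mono (show v + 1 ≤ n by omega)
          simp only [hs] at h3
          refine ⟨⟨q, by omega⟩, ?_, rfl⟩
          have h4 := hT1 ⟨q, by omega⟩
          have h5 := hT2 ⟨q, by omega⟩
          rcases lt_trichotomy (T ⟨q, by omega⟩ : ℕ) v with h | h | h
          · have := mono (show (T ⟨q, by omega⟩ : ℕ) + 1 ≤ v by omega)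
            simp only at *
            omega
          · exact h
          · have := mono (show v + 1 ≤ (T ⟨q, by omega⟩ : ℕ) by omega)
            simp only at *
            omega
      rw [cnt, ← Finset.card_map Fin.valEmbedding, e, Nat.card_Ico, Finset.sum_range_succ]
      omega
    · have h1 : α v = 0 := by
        by_contra h
        exact hv (by simpa using hsupp v h)
      have h2 := cnt_mem T
      rw [mem_piAntidiag] at h2
      by_contra h
      exact hv (by simpa using h2.2 v (by omega))

/-- The ballot condition on a pair of contents: for every `v < n`, the second row has at most
as many entries `≤ v` as the first row has entries `< v`. -/
def Ballot (n : ℕ) (P : (ℕ → ℕ) × (ℕ → ℕ)) : Prop :=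
  ∀ v < n, ∑ u ∈ range (v + 1), P.2 u ≤ ∑ u ∈ range v, P.1 u

/-- With rows weakly increasing, `T.1 i < T.2 i` for all `i` says that for each `v` the number of
entries `≤ v` in the second row is at most the number of entries `< v` in the first row. -/
lemma isSSYT2_iff {n a b : ℕ} (hab : b ≤ a) (T : (Fin a → Fin n) × (Fin b → Fin n)) :
    IsSSYT2 T ↔ (∀ i j, i ≤ j → T.1 i ≤ T.1 j) ∧ (∀ i j, i ≤ j → T.2 i ≤ T.2 j) ∧
      Ballot n (cnt T.1, cnt T.2) := by
  rw [IsSSYT2]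
  refine and_congr_right fun h1 => and_congr_right fun h2 => ?_
  have tot : ∀ v, ∑ u ∈ range v, cnt T.2 u ≤ b := by
    intro v
    have hm := mem_piAntidiag.mp (cnt_mem T.2)
    refine le_trans ?_ hm.1.le
    refine Finset.sum_le_sum_of_ne_zero fun x _ h => hm.2 x h
  constructor
  · intro h v _
    simp only
    by_contra! hlt
    have hb := tot (v + 1)
    set i := ∑ u ∈ range v, cnt T.1 u with hi
    have hib : i < b := by omega
    have e1 := (lt_iff_cnt h2 ⟨i, hib⟩ (v + 1)).mpr hlt
    have e2 : (T.1 ⟨i, by omega⟩ : ℕ) < T.2 ⟨i, hib⟩ := h ⟨i, hib⟩ (by simp; omega)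
    have e3 := (lt_iff_cnt h1 ⟨i, by omega⟩ v).mp (by omega)
    simp only at e3
    omega
  · intro h i hi
    have e1 := (lt_iff_cnt h2 i (T.2 i + 1)).mp (by omega)
    have e2 := h (T.2 i) (T.2 i).2
    simp only at e2
    exact (lt_iff_cnt h1 ⟨i, hi⟩ (T.2 i)).mpr (by simp only; omega)

open Classical in
lemma schur2_eq {R : Type*} [CommSemiring R] {n a b : ℕ} (hab : b ≤ a) (y : ℕ → R) :
    schur2 n a b (fun i : Fin n => y i) =
      ∑ P ∈ (piAntidiag (range n) a ×ˢ piAntidiag (range n) b) with Ballot n P,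
        (∏ v ∈ range n, y v ^ P.1 v) * ∏ v ∈ range n, y v ^ P.2 v := by
  rw [schur2, ← Finset.sum_filter]
  refine Finset.sum_nbij (fun T => (cnt T.1, cnt T.2)) ?_ ?_ ?_ ?_
  · intro T hT
    simp only [mem_filter, mem_univ, true_and, isSSYT2_iff hab] at hT
    simp only [mem_filter, mem_product]
    exact ⟨⟨cnt_mem _, cnt_mem _⟩, hT.2.2⟩
  · intro T hT T' hT' h
    simp only [coe_filter, Set.mem_ofPred_eq, mem_univ, true_and, isSSYT2_iff hab] at hT hT'
    simp only [Prod.mk.injEq] at h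
    exact Prod.ext (cnt_inj hT.1 hT'.1 h.1) (cnt_inj hT.2.1 hT'.2.1 h.2)
  · rintro ⟨α, β⟩ h
    simp only [coe_filter, Set.mem_ofPred_eq, mem_product] at h
    obtain ⟨T, hT, rfl⟩ := cnt_surj h.1.1
    obtain ⟨T', hT', rfl⟩ := cnt_surj h.1.2
    refine ⟨(T, T'), ?_, rfl⟩
    simp only [coe_filter, Set.mem_ofPred_eq, mem_univ, true_and, isSSYT2_iff hab]
    exact ⟨hT, hT', h.2⟩
  · intro T _
    rw [← prod_eq_cnt, ← prod_eq_cnt]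

open Classical in
lemma hh_eq {R : Type*} [CommSemiring R] {n k : ℕ} (y : ℕ → R) :
    hh n k (fun i : Fin n => y i) =
      ∑ c ∈ piAntidiag (range n) k, ∏ v ∈ range n, y v ^ c v := by
  rw [hh, ← Finset.sum_filter]
  refine Finset.sum_nbij cnt (fun T _ => cnt_mem T) ?_ ?_ (fun T _ => prod_eq_cnt T y)
  · intro T hT T' hT' h
    simp only [coe_filter, Set.mem_ofPred_eq, mem_univ, true_and] at hT hT'
    exact cnt_inj hT hT' h
  · intro α hα
    obtain ⟨T, hT, rfl⟩ := cnt_surj hα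
    exact ⟨T, by simpa using hT, rfl⟩

/-! ### Multidissections as noncrossing multigraphs -/

/-- The weight of a multigraph depends only on the degrees of its vertices. -/
lemma prod_prod_eq {R : Type*} [CommSemiring R] {m : ℕ} {F : ℕ → ℕ → ℕ} (w : ℕ → R) :
    ∏ i ∈ range m, ∏ j ∈ range m, (w i * w j) ^ F i j =
      ∏ v ∈ range m, w v ^ (rowS m F v + colS m F v) := by
  simp only [mul_pow, Finset.prod_mul_distrib, pow_add, rowS, colS, ← Finset.prod_pow_eq_pow_sum]
  congr 1
  exact Finset.prod_comm

lemma sum_sum_eq {m : ℕ} {F : ℕ → ℕ → ℕ} (g : ℕ → ℕ) :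
    ∑ i ∈ range m, ∑ j ∈ range m, F i j * (g i + g j) =
      ∑ v ∈ range m, g v * (rowS m F v + colS m F v) := by
  simp only [mul_add, Finset.sum_add_distrib, rowS, colS, Finset.mul_sum]
  congr 1
  · simp only [mul_comm]
  · rw [Finset.sum_comm]
    simp only [mul_comm]

/-- The part above the diagonal of a symmetric function on the vertices of the `m`-gon. -/
def upper (m : ℕ) (f : ZMod m → ZMod m → ℕ) (i j : ℕ) : ℕ :=
  if i < j ∧ j < m then f i j else 0

lemma upper_isNC {m : ℕ} {f : ZMod m → ZMod m → ℕ} (hf : IsAMulti m f) : IsNC m (upper m f) := by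
  refine ⟨fun i j h => ?_, fun i k j l h1 h2 h3 => ?_⟩
  · by_contra h'
    exact h (if_neg h')
  · by_cases hl : l < m
    · rw [upper, upper, if_pos (by omega), if_pos (by omega)]
      apply hf.2.2
      left
      rw [ZMod.val_natCast_of_lt (by omega), ZMod.val_natCast_of_lt (by omega),
        ZMod.val_natCast_of_lt (by omega), ZMod.val_natCast_of_lt (by omega)]
      omega
    · right
      exact if_neg (by omega)

lemma upper_inj {m : ℕ} [NeZero m] {f g : ZMod m → ZMod m → ℕ} (hf : IsAMulti m f)
    (hg : IsAMulti m g) (h : upper m f = upper m g) : f = g := by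
  have key : ∀ i j : ZMod m, i.val < j.val → f i j = g i j := by
    intro i j hij
    have := congrFun (congrFun h i.val) j.val
    rw [upper, upper, if_pos ⟨hij, ZMod.val_lt j⟩, if_pos ⟨hij, ZMod.val_lt j⟩] at this
    simpa using this
  funext i j
  rcases lt_trichotomy i.val j.val with h | h | h
  · exact key i j h
  · obtain rfl := ZMod.val_injective m h
    rw [hf.2.1, hg.2.1]
  · rw [hf.1, hg.1, key j i h]

lemma exists_upper_eq {m : ℕ} [NeZero m] {F : ℕ → ℕ → ℕ} (hF : IsNC m F) :
    ∃ f, IsAMulti m f ∧ upper m f = F := by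
  refine ⟨fun i j => F (min i.val j.val) (max i.val j.val), ⟨?_, ?_, ?_⟩, ?_⟩
  · intro i j
    simp only [min_comm, max_comm]
  · intro i
    by_contra h
    have := hF.supp _ _ h
    simp at this
  · rintro i j a b (⟨h1, h2, h3⟩ | ⟨h1, h2, h3⟩)
    · exact hF.nc _ _ _ _ h1 h2 h3
    · exact (hF.nc _ _ _ _ h1 h2 h3).symm
  · funext i j
    by_cases h : i < j ∧ j < m
    · rw [upper, if_pos h, ZMod.val_natCast_of_lt (by omega), ZMod.val_natCast_of_lt h.2,
        min_eq_left h.1.le, max_eq_right h.1.le]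
    · rw [upper, if_neg h]
      by_contra h'
      exact h (hF.supp _ _ (Ne.symm h'))

lemma prod_upper {R : Type*} [CommSemiring R] {m : ℕ} (f : ZMod m → ZMod m → ℕ) (w : ℕ → R) :
    (∏ i ∈ range m, ∏ j ∈ range m, if i < j then (w i * w j) ^ f i j else 1) =
      ∏ v ∈ range m, w v ^ (rowS m (upper m f) v + colS m (upper m f) v) := by
  rw [← prod_prod_eq]
  refine Finset.prod_congr rfl fun i _ => Finset.prod_congr rfl fun j hj => ?_
  rw [mem_range] at hj
  simp only [upper, hj, and_true]
  split_ifs <;> simp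

lemma dEndCount_eq_s12 (n : ℕ) (f : ZMod (n + 2) → ZMod (n + 2) → ℕ) :
    dEndCount n f =
      ∑ v ∈ range n, (rowS (n + 2) (upper (n + 2) f) v + colS (n + 2) (upper (n + 2) f) v) := by
  have h := sum_sum_eq (m := n + 2) (F := upper (n + 2) f) (fun v => if v < n then 1 else 0)
  have h2 : ∀ g : ℕ → ℕ, ∑ v ∈ range (n + 2), (if v < n then 1 else 0) * g v
      = ∑ v ∈ range n, g v := by
    intro g
    rw [Finset.sum_range_succ, Finset.sum_range_succ]
    simp only [lt_irrefl, if_false, zero_mul, add_zero, show ¬ n + 1 < n by omega]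
    exact Finset.sum_congr rfl fun v hv => by rw [if_pos (mem_range.mp hv), one_mul]
  rw [h2] at h
  rw [← h, dEndCount]
  refine Finset.sum_congr rfl fun i _ => Finset.sum_congr rfl fun j hj => ?_
  rw [mem_range] at hj
  simp only [upper, hj, and_true]
  split_ifs <;> simp

/-! ### The bijection -/

/-- The combinatorial data attached to a noncrossing multigraph on `n + 2` vertices: the number
`l` of right ends among the first `n` vertices, the numbers of left ends and of right ends at each
of these vertices (the contents of the two rows of a tableau), and the numbers of right ends at
the last two vertices. -/
def encode (n : ℕ) (F : ℕ → ℕ → ℕ) : Σ _ : ℕ, ((ℕ → ℕ) × (ℕ → ℕ)) × (ℕ → ℕ) :=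
  ⟨∑ v ∈ range n, colS (n + 2) F v,
    ((fun v => if v < n then rowS (n + 2) F v else 0,
      fun v => if v < n then colS (n + 2) F v else 0),
      fun t => if t < 2 then colS (n + 2) F (n + t) else 0)⟩

open Classical in
/-- The index set of the right-hand side: a number `l`, the contents of the rows of a tableau of
shape `(k - l, l)`, and the exponents of a monomial of degree `k - 2 * l` in two variables. -/
noncomputable def target (n k : ℕ) : Finset (Σ _ : ℕ, ((ℕ → ℕ) × (ℕ → ℕ)) × (ℕ → ℕ)) :=
  (range (k / 2 + 1)).sigma fun l =>
    {P ∈ piAntidiag (range n) (k - l) ×ˢ piAntidiag (range n) l | Ballot n P} ×ˢ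
      piAntidiag (range 2) (k - 2 * l)

/-- When the last two vertices are not joined, neither of them is a left end. -/
lemma rowS_last {n : ℕ} {F : ℕ → ℕ → ℕ} (hF : IsNC (n + 2) F) (h0 : F n (n + 1) = 0) :
    rowS (n + 2) F n = 0 ∧ rowS (n + 2) F (n + 1) = 0 := by
  constructor <;>
  · refine Finset.sum_eq_zero fun j hj => ?_
    by_contra h
    have := hF.supp _ _ h
    obtain rfl : j = n + 1 := by omega
    omega

lemma sum_rowS_of_last {n : ℕ} {F : ℕ → ℕ → ℕ} (hF : IsNC (n + 2) F) (h0 : F n (n + 1) = 0) :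
    ∑ v ∈ range n, rowS (n + 2) F v = ∑ v ∈ range n, colS (n + 2) F v +
      (colS (n + 2) F n + colS (n + 2) F (n + 1)) := by
  have h := sum_rowS_eq hF (i := n + 2) (j := n + 2) (by omega) le_rfl le_rfl
  have hc : cut (n + 2) F (n + 2) (n + 2) = 0 := by simp [cut]
  have hr := rowS_last hF h0
  rw [hc, Finset.sum_range_succ, Finset.sum_range_succ, Finset.sum_range_succ _ (n + 1),
    Finset.sum_range_succ _ n] at h
  omega

lemma sum_range_ite (n m : ℕ) (h : m ≤ n) (g : ℕ → ℕ) :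
    ∑ v ∈ range m, (if v < n then g v else 0) = ∑ v ∈ range m, g v :=
  Finset.sum_congr rfl fun v hv => if_pos (by simp at hv; omega)

lemma encode_mem {n k : ℕ} {F : ℕ → ℕ → ℕ} (hF : IsNC (n + 2) F) (h0 : F n (n + 1) = 0)
    (hk : ∑ v ∈ range n, (rowS (n + 2) F v + colS (n + 2) F v) = k) : encode n F ∈ target n k := by
  have hs := sum_rowS_of_last hF h0
  rw [Finset.sum_add_distrib] at hk
  simp only [encode, target, mem_sigma, mem_product, mem_filter, mem_piAntidiag, mem_range]
  refine ⟨by omega, ⟨⟨⟨?_, ?_⟩, ?_, ?_⟩, ?_⟩, ?_, ?_⟩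
  · rw [sum_range_ite n n le_rfl]; omega
  · intro i hi
    by_contra h
    exact hi (if_neg h)
  · rw [sum_range_ite n n le_rfl]
  · intro i hi
    by_contra h
    exact hi (if_neg h)
  · intro v hv
    simp only
    rw [sum_range_ite n _ (by omega), sum_range_ite n _ (by omega)]
    have := sum_rowS_eq hF (i := v) (j := v + 1) le_rfl (by omega) (by omega)
    omega
  · rw [sum_range_ite 2 2 le_rfl, Finset.sum_range_succ, Finset.sum_range_one]
    simp only [add_zero]
    omega
  · intro i hi
    by_contra h
    exact hi (if_neg h)

/-- The data record the degrees at all `n + 2` vertices, left ends at the last two being absent. -/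
lemma encode_inj {n : ℕ} {F G : ℕ → ℕ → ℕ} (hF : IsNC (n + 2) F) (h0 : F n (n + 1) = 0)
    (hG : IsNC (n + 2) G) (h0' : G n (n + 1) = 0) (h : encode n F = encode n G) : F = G := by
  simp only [encode, Sigma.mk.injEq, heq_eq_eq, Prod.mk.injEq] at h
  obtain ⟨-, ⟨h1, h2⟩, h3⟩ := h
  have r1 := rowS_last hF h0
  have r2 := rowS_last hG h0'
  have c0 := congrFun h3 0
  have c1 := congrFun h3 1
  simp only [add_zero, Nat.zero_lt_two, Nat.one_lt_two, if_true] at c0 c1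
  refine hF.ext_of_rowS_colS hG ?_ ?_ <;> intro v hv
  · by_cases h : v < n
    · simpa [h] using congrFun h1 v
    · obtain rfl | rfl : v = n ∨ v = n + 1 := by omega
      · rw [r1.1, r2.1]
      · rw [r1.2, r2.2]
  · by_cases h : v < n
    · simpa [h] using congrFun h2 v
    · obtain rfl | rfl : v = n ∨ v = n + 1 := by omega
      · exact c0
      · exact c1

/-- At the last two vertices, where no edge starts, the ballot condition holds because the total
number of right ends, `l + (k - 2 * l)`, equals the number `k - l` of left ends. -/
lemma encode_surj {n k : ℕ} {q : Σ _ : ℕ, ((ℕ → ℕ) × (ℕ → ℕ)) × (ℕ → ℕ)} (hq : q ∈ target n k) :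
    ∃ F, IsNC (n + 2) F ∧ F n (n + 1) = 0 ∧
      ∑ v ∈ range n, (rowS (n + 2) F v + colS (n + 2) F v) = k ∧ encode n F = q := by
  obtain ⟨l, ⟨α, β⟩, c⟩ := q
  simp only [target, mem_sigma, mem_product, mem_filter, mem_piAntidiag, mem_range] at hq
  obtain ⟨hl, ⟨⟨⟨ha, ha'⟩, hb, hb'⟩, hbal⟩, hc, hc'⟩ := hq
  set b : ℕ → ℕ := fun v => if v < n then β v else c (v - n) with hbdef
  have hc2 : c 0 + c 1 = k - 2 * l := by
    rw [← hc, Finset.sum_range_succ, Finset.sum_range_one]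
  have hbn : ∀ t ≤ n, ∑ u ∈ range t, b u = ∑ u ∈ range t, β u := fun t ht =>
    Finset.sum_congr rfl fun v hv => if_pos (by simp at hv; omega)
  have b0 : b n = c 0 := by simp [hbdef]
  have b1 : b (n + 1) = c 1 := by simp [hbdef]
  have αn : ∀ v, n ≤ v → α v = 0 := fun v hv => by
    by_contra h
    have := ha' v h
    omega
  have hAn : ∑ u ∈ range (n + 1), α u = k - l := by
    rw [Finset.sum_range_succ, ha, αn n le_rfl, add_zero]
  have hAn' : ∑ u ∈ range (n + 2), α u = k - l := by
    rw [Finset.sum_range_succ, hAn, αn _ (by omega), add_zero]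
  have hBn : ∑ u ∈ range (n + 1), b u = l + c 0 := by
    rw [Finset.sum_range_succ, hbn n le_rfl, hb, b0]
  have hBn' : ∑ u ∈ range (n + 2), b u = l + c 0 + c 1 := by
    rw [Finset.sum_range_succ, hBn, b1]
  obtain ⟨F, hF, hr, hcol⟩ := exists_isNC (m := n + 2) α b (by omega) (fun v hv => by
    by_cases h : v < n
    · rw [hbn _ (by omega)]
      exact hbal v h
    · obtain rfl | rfl : v = n ∨ v = n + 1 := by omega
      · rw [hBn, ha]; omega
      · rw [hBn', hAn]; omega) (by rw [hAn', hBn']; omega)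
  have hrn : ∑ v ∈ range n, rowS (n + 2) F v = k - l := by
    rw [← ha]
    exact Finset.sum_congr rfl fun v hv => hr v (by simp at hv; omega)
  have hcn : ∑ v ∈ range n, colS (n + 2) F v = l := by
    rw [← hb, ← hbn n le_rfl]
    exact Finset.sum_congr rfl fun v hv => hcol v (by simp at hv; omega)
  refine ⟨F, hF, ?_, ?_, ?_⟩
  · have h1 := hr n (by omega)
    rw [αn n le_rfl, rowS, Finset.sum_eq_zero_iff] at h1
    exact h1 _ (by simp)
  · rw [Finset.sum_add_distrib, hrn, hcn]
    omega
  · simp only [encode, Sigma.mk.injEq, heq_eq_eq, Prod.mk.injEq]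
    refine ⟨hcn, ⟨?_, ?_⟩, ?_⟩ <;> funext v
    · split_ifs with h
      · exact hr v (by omega)
      · exact (αn v (by omega)).symm
    · split_ifs with h
      · rw [hcol v (by omega), hbdef]
        exact if_pos h
      · by_contra h'
        exact h (hb' v (Ne.symm h'))
    · split_ifs with h
      · rw [hcol _ (by omega)]
        simp [hbdef]
      · by_contra h'
        exact h (hc' v (Ne.symm h'))

/-- The right-hand side of the theorem, expanded as a sum of monomials over `target`. -/
lemma rhs_eq {R : Type*} [CommSemiring R] (n k : ℕ) (w : ℕ → R) :
    ∑ l ∈ range (k / 2 + 1), schur2 n (k - l) l (fun i : Fin n => w i) *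
        hh 2 (k - 2 * l) (fun j : Fin 2 => w (n + j)) =
      ∑ q ∈ target n k, ((∏ v ∈ range n, w v ^ q.2.1.1 v) * ∏ v ∈ range n, w v ^ q.2.1.2 v) *
        ∏ t ∈ range 2, w (n + t) ^ q.2.2 t := by
  classical
  rw [target, Finset.sum_sigma]
  refine Finset.sum_congr rfl fun l hl => ?_
  rw [mem_range] at hl
  rw [schur2_eq (by omega), hh_eq (fun t => w (n + t)), Finset.sum_mul_sum, Finset.sum_product]

/-- Weyl character computation in Lemma 4.2.  Let `n ≥ 2`, `k ≥ 0`.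
In `ℂ[y_1,…,y_n,z_1,z_2]` — the variables being indexed by the vertices `ZMod (n+2)` of
`P_{n+2}`, with `w_i = y_i` for the first `n` vertices, `w_{n+1} = z_1`, `w_{n+2} = z_2`
— the sum over all A-multidissections `f` of `P_{n+2}` with `f({n+1,n+2}) = 0` and
exactly `k` endpoints (with multiplicity) in `{1,…,n}` of `∏_{e={i,j}} (w_i w_j)^{f(e)}`
equals `Σ_{ℓ=0}^{⌊k/2⌋} s_{(k−ℓ,ℓ)}(y_1,…,y_n)·h_{k−2ℓ}(z_1,z_2)`. -/
theorem statement12 (n k : ℕ) (hn : 2 ≤ n) :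
    (∑ᶠ (f : ZMod (n+2) → ZMod (n+2) → ℕ)
        (_ : IsAMulti (n+2) f ∧
             f ((n : ℕ) : ZMod (n+2)) (((n+1 : ℕ)) : ZMod (n+2)) = 0 ∧
             dEndCount n f = k),
        ∏ i ∈ Finset.range (n+2), ∏ j ∈ Finset.range (n+2),
          if i < j then
            (MvPolynomial.X ((i : ℕ) : ZMod (n+2)) *
              MvPolynomial.X ((j : ℕ) : ZMod (n+2)) :
                MvPolynomial (ZMod (n+2)) ℂ) ^ f ((i : ℕ) : ZMod (n+2)) ((j : ℕ) : ZMod (n+2))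
          else 1) =
      ∑ l ∈ Finset.range (k / 2 + 1),
        schur2 n (k - l) l (fun i : Fin n => MvPolynomial.X ((i : ℕ) : ZMod (n+2))) *
          hh 2 (k - 2 * l)
            (fun j : Fin 2 => MvPolynomial.X (((n + (j : ℕ) : ℕ)) : ZMod (n+2))) := by
  classical
  set w : ℕ → MvPolynomial (ZMod (n + 2)) ℂ := fun v => MvPolynomial.X (v : ZMod (n + 2)) with hw
  have hset : ∀ f : ZMod (n + 2) → ZMod (n + 2) → ℕ,
      (IsAMulti (n+2) f ∧ f ((n : ℕ) : ZMod (n+2)) (((n+1 : ℕ)) : ZMod (n+2)) = 0 ∧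
        dEndCount n f = k) ↔ (IsAMulti (n + 2) f ∧ upper (n + 2) f n (n + 1) = 0 ∧
        ∑ v ∈ range n, (rowS (n + 2) (upper (n + 2) f) v + colS (n + 2) (upper (n + 2) f) v)
          = k) := by
    intro f
    rw [dEndCount_eq_s12, upper, if_pos (by omega)]
  refine Eq.trans ?_ (rhs_eq n k w).symm
  rw [← finsum_mem_coe_finset]
  refine finsum_mem_eq_of_bijOn (s := {f | IsAMulti (n+2) f ∧
    f ((n : ℕ) : ZMod (n+2)) (((n+1 : ℕ)) : ZMod (n+2)) = 0 ∧ dEndCount n f = k})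
    (fun f => encode n (upper (n + 2) f)) ⟨?_, ?_, ?_⟩ ?_
  · intro f hf
    obtain ⟨h1, h2, h3⟩ := (hset f).mp hf
    exact encode_mem (upper_isNC h1) h2 h3
  · intro f hf g hg h
    obtain ⟨h1, h2, h3⟩ := (hset f).mp hf
    obtain ⟨h1', h2', h3'⟩ := (hset g).mp hg
    exact upper_inj h1 h1' (encode_inj (upper_isNC h1) h2 (upper_isNC h1') h2' h)
  · intro q hq
    obtain ⟨F, hF, h2, h3, rfl⟩ := encode_surj hq
    obtain ⟨f, hf, rfl⟩ := exists_upper_eq hF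
    exact ⟨f, (hset f).mpr ⟨hf, h2, h3⟩, rfl⟩
  · intro f hf
    obtain ⟨h1, h2, h3⟩ := (hset f).mp hf
    have hr := rowS_last (upper_isNC h1) h2
    refine (prod_upper f w).trans ?_
    rw [Finset.prod_range_succ, Finset.prod_range_succ, hr.1, hr.2, ← Finset.prod_mul_distrib,
      Finset.prod_range_succ _ 1, Finset.prod_range_one]
    simp only [encode, Nat.zero_lt_two, Nat.one_lt_two, if_true, add_zero, zero_add, mul_assoc]
    congr 1
    refine Finset.prod_congr rfl fun v hv => ?_
    rw [mem_range] at hv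
    rw [if_pos hv, if_pos hv, pow_add]
end
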